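/- Let Φ be a Young function of class Δ₂ ∩ ∇₂ and let W: ℝ³ × ℝ^{3×3} → ℝ be a Carathéodory function, 1-periodic in the planar variable x_α, satisfying β'Φ(|ξ|) − 1/β' ≤ W(x,ξ) ≤ β(1+Φ(|ξ|)) for some 0<β'<β. Define W_hom(ξ_α) := liminf_{t→+∞} t^{−2} · inf{ ∫_{(tQ')₁} W(x, (ξ_α+∇_αφ | ∇₃φ)) dx : φ ∈ 𝒜_t } for ξ_α ∈ ℝ^{3×2}. Then W_hom is quasiconvex: for every ξ_α ∈ ℝ^{3×2} and every Lipschitz map ψ: Q' → ℝ³ vanishing on ∂Q', W_hom(ξ_α) ≤ ∫_{Q'} W_hom(ξ_α + ∇ψ(y_α)) dy_α. -/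

import Mathlib

/-!
Write `m_R(ξ, c)` (`cinf`) for the infimum of the energy on the cylinder over the planar square of
centre `c` and half-side `R`, taken over Lipschitz maps vanishing off the cylinder. Truncation shows
that these maps give the same infimum as the admissible class (`cellInf_eq`).

The proof rests on a subadditivity estimate (`cinf_subadd`): if `v` is a Lipschitz map vanishing
outside a large square whose gradient is a constant planar matrix `A i` on disjoint subsquares, then
`m_R(ξ, c)` is at most the sum of the infima for `ξ + A i` on the subsquares plus a constant times
the remaining area, because nearly optimal patches can be added to `v`.

* With `v = 0` and integer translates of one nearly optimal cell, periodicity of `W` gives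
  `m_R(ξ, c) ≤ (2R)² (W_hom(ξ) + ε)` for all large `R`, uniformly in `c` (`cinf_le_homDens`). In
  particular the lower limit is a limit, and `W_hom` is Borel measurable as a countable limit of
  upper semicontinuous functions (`measurable_homDens`).
* Given `ψ`, the Besicovitch covering theorem fills the unit square up to measure `ε` with finitely
  many disjoint squares centred at points `p` at which `ψ` is nearly affine and which are nearly
  Lebesgue points of `g = W_hom(ξ + ∇ψ)` (`exists_balls`). On slightly smaller squares `ψ` is made
  exactly affine at the expense of a bounded change of its Lipschitz constant (`exists_flat`).
* Blowing this map up to the scale `T` and inserting it as `v` in `cinf_subadd`, the first step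
  bounds the energy on each subsquare by its area times `g p + ε`, and the bad set has area
  `O(ε) T²`. Dividing by `T²` and letting `T → ∞`, then `ε → 0`, gives the claim (`core`).

The growth condition enters only through a lower bound for `W` and an upper bound on bounded sets of
matrices (`Good`). These bounds also make every integral below convergent, so that no integral or
infimum takes a default value.
-/


open MeasureTheory Filter

noncomputable section

abbrev V3 : Type := Fin 3 → ℝ
abbrev V2 : Type := Fin 2 → ℝ
abbrev M33 : Type := Matrix (Fin 3) (Fin 3) ℝ
abbrev M32 : Type := Matrix (Fin 3) (Fin 2) ℝ

/-- `Φ : [0,∞) → [0,∞)` is a Young function: continuous, convex, positive for `t > 0`,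
`Φ(t)/t → 0` as `t → 0⁺` and `Φ(t)/t → ∞` as `t → ∞`. -/
def IsYoung (Φ : ℝ → ℝ) : Prop :=
  ContinuousOn Φ (Set.Ici 0) ∧ ConvexOn ℝ (Set.Ici 0) Φ ∧
  (∀ t : ℝ, 0 < t → 0 < Φ t) ∧
  Tendsto (fun t => Φ t / t) (nhdsWithin 0 (Set.Ioi 0)) (nhds 0) ∧
  Tendsto (fun t => Φ t / t) atTop atTop

/-- The Δ₂ condition (at infinity). -/
def Delta2 (Φ : ℝ → ℝ) : Prop :=
  ∃ α : ℝ, 0 < α ∧ ∃ t₀ : ℝ, 0 ≤ t₀ ∧ ∀ t, t₀ ≤ t → Φ (2 * t) ≤ α * Φ t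

/-- The ∇₂ condition. -/
def Nabla2 (Φ : ℝ → ℝ) : Prop :=
  ∃ β : ℝ, 0 < β ∧ ∃ t₀ : ℝ, 1 < t₀ ∧ ∀ t, t₀ ≤ t → Φ t ≤ (1 / (2 * β)) * Φ (β * t)

/-- Frobenius norm of a real matrix. -/
def frobNorm {m n : ℕ} (ξ : Matrix (Fin m) (Fin n) ℝ) : ℝ :=
  Real.sqrt (∑ i, ∑ j, (ξ i j) ^ 2)

/-- The open cylinder `(tQ')₁ = (−t/2,t/2)² × (−1/2,1/2)`. -/
def openCyl (t : ℝ) : Set V3 := {x | |x 0| < t / 2 ∧ |x 1| < t / 2 ∧ |x 2| < 1 / 2}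

/-- The lateral boundary `∂((−t/2,t/2)²) × (−1/2,1/2)`. -/
def latBdry (t : ℝ) : Set V3 := {x | max |x 0| |x 1| = t / 2 ∧ |x 2| < 1 / 2}

/-- The (a.e. defined, via Rademacher) matrix of partial derivatives of a Lipschitz map:
row `i`, column `j` is `∂φᵢ/∂xⱼ`. -/
def gradm (φ : V3 → V3) (x : V3) : M33 :=
  Matrix.of fun i j => fderiv ℝ φ x (Pi.single j 1) i

/-- Planar-gradient matrix (3×2) of a map on `ℝ²`. -/
def gradm2 (ψ : V2 → V3) (y : V2) : M32 :=
  Matrix.of fun i j => fderiv ℝ ψ y (Pi.single j 1) i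

/-- The 3×3 matrix `(ξ_α + ∇_αφ | ∇₃φ)`: first two columns of `A` shifted by `ξ_α`,
third column untouched. -/
def withCol (ξα : M32) (A : M33) : M33 :=
  Matrix.of fun i j => (if h : (j : ℕ) < 2 then ξα i ⟨(j : ℕ), h⟩ else 0) + A i j

/-- The admissible class `𝒜_t`: Lipschitz maps vanishing on the lateral boundary. -/
def AdmSet (t : ℝ) : Set (V3 → V3) :=
  {φ | (∃ K : NNReal, LipschitzWith K φ) ∧ ∀ x ∈ latBdry t, φ x = 0}

/-- The constrained admissible class `𝒜_t(V)`: members of `𝒜_t` with values in `V`. -/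
def AdmVSet (t : ℝ) (V : Submodule ℝ V3) : Set (V3 → V3) :=
  {φ | φ ∈ AdmSet t ∧ ∀ x, φ x ∈ V}

/-- The cell energy `∫_{(tQ')₁} f(x, (ξ_α + ∇_αφ | ∇₃φ)) dx`. -/
def cellE (f : V3 → M33 → ℝ) (ξα : M32) (t : ℝ) (φ : V3 → V3) : ℝ :=
  ∫ x in openCyl t, f x (withCol ξα (gradm φ x))

/-- The cell infimum over a class `S` of test maps. -/
def cellInf (f : V3 → M33 → ℝ) (ξα : M32) (t : ℝ) (S : Set (V3 → V3)) : ℝ :=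
  sInf ((fun φ => cellE f ξα t φ) '' S)

/-- The constrained tangentially homogenized density `Tf⁰hom(V, ξ_α)`. -/
def Tf0hom (f : V3 → M33 → ℝ) (V : Submodule ℝ V3) (ξα : M32) : ℝ :=
  liminf (fun t : ℝ => (t ^ 2)⁻¹ * cellInf f ξα t (AdmVSet t V)) atTop

/-- The unconstrained homogenized density (liminf of the scaled cell infima over `𝒜_t`). -/
def homDens (f : V3 → M33 → ℝ) (ξα : M32) : ℝ :=
  liminf (fun t : ℝ => (t ^ 2)⁻¹ * cellInf f ξα t (AdmSet t)) atTop

/-- `P` is the orthogonal projection of `ℝ³` onto the subspace `V` (with respect to the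
Euclidean inner product). -/
def IsOrthProjOnto (V : Submodule ℝ V3) (P : V3 → V3) : Prop :=
  IsLinearMap ℝ P ∧ (∀ x, P x ∈ V) ∧ (∀ x ∈ V, P x = x) ∧
    (∀ x : V3, ∀ v ∈ V, (∑ i, (x i - P x i) * v i) = 0)

/-- Column-wise action `𝐏ξ = (Pξ₁ | Pξ₂ | Pξ₃)` of a projection on 3×3 matrices. -/
def Pmat (P : V3 → V3) (ξ : M33) : M33 :=
  Matrix.of fun i j => P (fun k => ξ k j) i

/-- The penalized integrand `f̄(x,ξ) = f(x,𝐏ξ) + Φ(|ξ − 𝐏ξ|)`. -/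
def fbar (Φ : ℝ → ℝ) (P : V3 → V3) (f : V3 → M33 → ℝ) : V3 → M33 → ℝ :=
  fun x ξ => f x (Pmat P ξ) + Φ (frobNorm (ξ - Pmat P ξ))

/-- Carathéodory function: measurable in `x`, continuous in `ξ`. -/
def Caratheodory (f : V3 → M33 → ℝ) : Prop :=
  (∀ ξ, Measurable fun x => f x ξ) ∧ (∀ x, Continuous fun ξ => f x ξ)

/-- (H1): 1-periodicity in the planar variable. -/
def H1per (f : V3 → M33 → ℝ) : Prop :=
  ∀ (x : V3) (ξ : M33) (i : Fin 3), (i : ℕ) < 2 → f (x + Pi.single i 1) ξ = f x ξ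

/-- (H2): `Φ`-coercivity and `Φ`-growth, for a.e. `x` and all `ξ`. -/
def H2growth (Φ : ℝ → ℝ) (α β : ℝ) (f : V3 → M33 → ℝ) : Prop :=
  ∀ᵐ x : V3 ∂volume, ∀ ξ : M33, α * Φ (frobNorm ξ) ≤ f x ξ ∧ f x ξ ≤ β * (1 + Φ (frobNorm ξ))

/-- `ξ_α ∈ V²`: both columns of the 3×2 matrix belong to `V`. -/
def colsIn (V : Submodule ℝ V3) (ξα : M32) : Prop :=
  ∀ j : Fin 2, (fun i => ξα i j) ∈ V

/-- The open unit square `Q' = (−1/2,1/2)²`. -/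
def sq2 : Set V2 := {y | |y 0| < 1 / 2 ∧ |y 1| < 1 / 2}

/-! ### Cylinders, patches and their energies -/

/-- Planar part `x_α` of a point `x = (x_α, x₃)`, as a continuous linear map. -/
def pl : V3 →L[ℝ] V2 := ContinuousLinearMap.pi fun i => ContinuousLinearMap.proj (Fin.castSucc i)

/-- The open cylinder over the planar square with centre `c` and half-side `R`. -/
def cyl (c : V2) (R : ℝ) : Set V3 := {x | ‖pl x - c‖ < R ∧ |x 2| < 1 / 2}

/-- Lipschitz maps vanishing off the cylinder `{‖x_α - c‖ < R}`. Unlike `AdmSet`, the maps vanish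
on the whole exterior, so that patches over disjoint squares may simply be added. -/
def patch (c : V2) (R : ℝ) : Set (V3 → V3) :=
  {φ | (∃ K : NNReal, LipschitzWith K φ) ∧ ∀ x, R ≤ ‖pl x - c‖ → φ x = 0}

/-- The energy of `ξ + ∇φ` over the cylinder `cyl c R`. -/
def en (W : V3 → M33 → ℝ) (ξ : M32) (c : V2) (R : ℝ) (φ : V3 → V3) : ℝ :=
  ∫ x in cyl c R, W x (withCol ξ (gradm φ x))

/-- The infimum of the energy over patches on `cyl c R`. -/
def cinf (W : V3 → M33 → ℝ) (ξ : M32) (c : V2) (R : ℝ) : ℝ :=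
  sInf (en W ξ c R '' patch c R)

/-- The properties of the integrand that the argument uses: the growth condition enters only
through a global lower bound and an upper bound on bounded sets of matrices. -/
structure Good (W : V3 → M33 → ℝ) (m : ℝ) : Prop where
  car : Caratheodory W
  per : H1per W
  low : ∀ x ξ, m ≤ W x ξ
  up : ∀ r : ℝ, ∃ C : ℝ, ∀ x ξ, (∀ i j, |ξ i j| ≤ r) → W x ξ ≤ C

@[simp] lemma pl_apply (x : V3) (i : Fin 2) : pl x i = x (Fin.castSucc i) := rfl

lemma norm_pl_le (x : V3) : ‖pl x‖ ≤ ‖x‖ := by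
  refine (pi_norm_le_iff_of_nonneg (norm_nonneg _)).2 fun i => ?_
  exact norm_le_pi_norm x _

lemma lipschitz_pl : LipschitzWith 1 pl :=
  LipschitzWith.of_dist_le_mul fun x y => by
    rw [dist_eq_norm, dist_eq_norm, ← map_sub]
    simpa using norm_pl_le (x - y)

lemma isOpen_cyl (c : V2) (R : ℝ) : IsOpen (cyl c R) := by
  have h1 : Continuous fun x : V3 => ‖pl x - c‖ := by fun_prop
  have h2 : Continuous fun x : V3 => |x 2| := by fun_prop
  exact (isOpen_lt h1 continuous_const).and (isOpen_lt h2 continuous_const)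

lemma cyl_eq_pi (c : V2) {R : ℝ} (hR : 0 < R) :
    cyl c R = Set.univ.pi fun i => Set.Ioo ((![c 0 - R, c 1 - R, -(1/2)] : V3) i)
      ((![c 0 + R, c 1 + R, 1/2] : V3) i) := by
  ext x
  simp only [cyl, Set.mem_ofPred_eq, pi_norm_lt_iff hR, Set.mem_univ_pi,
    Fin.forall_fin_succ, Set.mem_Ioo]
  simp [abs_lt]
  constructor
  · rintro ⟨⟨⟨h1, h2⟩, h3, h4⟩, h5, h6⟩
    refine ⟨⟨?_, ?_⟩, ⟨?_, ?_⟩, ?_, ?_⟩ <;> linarith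
  · rintro ⟨⟨h1, h2⟩, ⟨h3, h4⟩, h5, h6⟩
    refine ⟨⟨⟨?_, ?_⟩, ?_, ?_⟩, ?_, ?_⟩ <;> linarith

lemma cyl_eq_empty (c : V2) {R : ℝ} (hR : R ≤ 0) : cyl c R = ∅ := by
  ext x
  simp only [cyl, Set.mem_ofPred_eq, Set.mem_empty_iff_false, iff_false, not_and]
  intro h
  linarith [norm_nonneg (pl x - c)]

lemma cyl_le_pi (c : V2) {R : ℝ} (hR : 0 < R) : (![c 0 - R, c 1 - R, -(1/2)] : V3) ≤
      (![c 0 + R, c 1 + R, 1/2] : V3) := by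
  intro i
  fin_cases i <;> simp <;> linarith

lemma vol_cyl (c : V2) {R : ℝ} (hR : 0 ≤ R) : volume.real (cyl c R) = (2 * R) ^ 2 := by
  rcases hR.eq_or_lt with h | h
  · rw [cyl_eq_empty c h.ge, ← h]; simp
  · rw [cyl_eq_pi c h, Measure.real, Real.volume_pi_Ioo_toReal (cyl_le_pi c h), Fin.prod_univ_three]
    simp
    ring

lemma vol_cyl_lt_top (c : V2) (R : ℝ) : volume (cyl c R) < ⊤ := by
  rcases le_or_gt R 0 with h | h
  · rw [cyl_eq_empty c h]; simp
  · rw [cyl_eq_pi c h, Real.volume_pi_Ioo]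
    exact ENNReal.prod_lt_top fun i _ => ENNReal.ofReal_lt_top

/-- The lateral boundary of a cylinder is a null set. -/
lemma ae_ne_bdry (c : V2) (R : ℝ) : ∀ᵐ x : V3, ‖pl x - c‖ ≠ R := by
  have key : ∀ (i : Fin 3) (a : ℝ), ∀ᵐ x : V3, x i ≠ a := fun i a => by
    have := Measure.pi_hyperplane (fun _ : Fin 3 => (volume : Measure ℝ)) i a
    rw [ae_iff]
    simpa [volume_pi] using this
  filter_upwards [key 0 (c 0 + R), key 0 (c 0 - R), key 1 (c 1 + R), key 1 (c 1 - R)]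
    with x h1 h2 h3 h4 h
  have hR : 0 ≤ R := h ▸ norm_nonneg _
  have hle : ‖pl x - c‖ ≤ R := h.le
  rw [pi_norm_le_iff_of_nonneg hR] at hle
  have hlt : ∀ i, ‖(pl x - c) i‖ < R := by
    have h0 := hle 0
    have h1' := hle 1
    intro i
    refine lt_of_le_of_ne (hle i) fun he => ?_
    rw [Real.norm_eq_abs, abs_eq hR] at he
    fin_cases i
    · rcases he with he | he
      · apply h1; simp at he; linarith
      · apply h2; simp at he; linarith
    · rcases he with he | he
      · apply h3; simp at he; linarith
      · apply h4; simp at he; linarith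
  rcases hR.eq_or_lt with h0 | h0
  · exact absurd (hlt 0) (by rw [← h0]; exact not_lt.2 (norm_nonneg _))
  · exact absurd h ((pi_norm_lt_iff h0).2 hlt).ne

lemma gradm_congr {φ φ' : V3 → V3} {x : V3} (h : φ =ᶠ[nhds x] φ') : gradm φ x = gradm φ' x := by
  simp only [gradm, h.fderiv_eq]

lemma abs_gradm_le {φ : V3 → V3} {x : V3} {K : ℝ} (h : ‖fderiv ℝ φ x‖ ≤ K) (i j : Fin 3) :
    |gradm φ x i j| ≤ K := by
  have h1 : ‖(Pi.single j 1 : V3)‖ = 1 := by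
    rw [Pi.norm_single]; simp
  calc |gradm φ x i j| = ‖(fderiv ℝ φ x (Pi.single j 1)) i‖ := rfl
    _ ≤ ‖fderiv ℝ φ x (Pi.single j 1)‖ := norm_le_pi_norm _ i
    _ ≤ ‖fderiv ℝ φ x‖ * ‖(Pi.single j 1 : V3)‖ := ContinuousLinearMap.le_opNorm _ _
    _ ≤ K := by rw [h1, mul_one]; exact h

lemma abs_withCol_le {ξ : M32} {A : M33} {r K : ℝ} (hr : 0 ≤ r) (h : ∀ i j, |ξ i j| ≤ r)
    (hA : ∀ i j, |A i j| ≤ K) (i j : Fin 3) : |withCol ξ A i j| ≤ r + K := by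
  simp only [withCol, Matrix.of_apply]
  refine (abs_add_le _ _).trans (add_le_add ?_ (hA i j))
  split_ifs
  · exact h _ _
  · simpa using hr

lemma measurable_gradm (φ : V3 → V3) :
    Measurable (fun x => (fun i j => gradm φ x i j : Fin 3 → Fin 3 → ℝ)) := by
  refine measurable_pi_lambda _ fun i => measurable_pi_lambda _ fun j => ?_
  exact (measurable_pi_apply i).comp (measurable_fderiv_apply_const ℝ φ (Pi.single j 1))

lemma measurable_integrand {W : V3 → M33 → ℝ} (hW : Caratheodory W) (ξ : M32) (φ : V3 → V3) :
    Measurable fun x => W x (withCol ξ (gradm φ x)) := by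
  have h1 : Measurable (Function.uncurry fun (A : Fin 3 → Fin 3 → ℝ) (x : V3) =>
      W x (withCol ξ (Matrix.of A))) := by
    refine measurable_uncurry_of_continuous_of_measurable (fun x => ?_) (fun A => hW.1 _)
    refine (hW.2 x).comp ?_
    refine continuous_pi fun i => continuous_pi fun j => ?_
    simp only [withCol, Matrix.of_apply]
    fun_prop
  exact h1.comp ((measurable_gradm φ).prodMk measurable_id)

lemma exists_bound (ξ : M32) : ∃ r : ℝ, 0 ≤ r ∧ ∀ i j, |ξ i j| ≤ r := by
  refine ⟨∑ i, ∑ j, |ξ i j|, by positivity, fun i j => ?_⟩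
  refine le_trans ?_ (Finset.single_le_sum (f := fun i => ∑ j, |ξ i j|)
    (fun i _ => by positivity) (Finset.mem_univ i))
  exact Finset.single_le_sum (f := fun j => |ξ i j|) (fun i _ => by positivity) (Finset.mem_univ j)

lemma integrable_integrand {W : V3 → M33 → ℝ} {m : ℝ} (hW : Good W m) (ξ : M32) {φ : V3 → V3}
    (hφ : ∃ K : NNReal, LipschitzWith K φ) {S : Set V3} (hS : volume S < ⊤) :
    IntegrableOn (fun x => W x (withCol ξ (gradm φ x))) S := by
  obtain ⟨K, hK⟩ := hφ
  obtain ⟨r, hr0, hr⟩ := exists_bound ξ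
  obtain ⟨C, hC⟩ := hW.up (r + K)
  refine Measure.integrableOn_of_bounded (M := max |m| |C|) hS.ne
    (measurable_integrand hW.car ξ φ).aestronglyMeasurable (ae_of_all _ fun x => ?_)
  have h1 := hW.low x (withCol ξ (gradm φ x))
  have h2 := hC x _ (abs_withCol_le hr0 hr
    (abs_gradm_le (norm_fderiv_le_of_lipschitz ℝ (x₀ := x) hK)))
  rw [Real.norm_eq_abs]
  exact abs_le_max_abs_abs h1 h2

lemma en_ge {W : V3 → M33 → ℝ} {m : ℝ} (hW : Good W m) (ξ : M32) (c : V2) {R : ℝ} (hR : 0 ≤ R)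
    {φ : V3 → V3} (hφ : φ ∈ patch c R) : m * (2 * R) ^ 2 ≤ en W ξ c R φ := by
  have h := setIntegral_mono_on (μ := volume) (s := cyl c R) (f := fun _ => m)
    (integrableOn_const (vol_cyl_lt_top c R).ne)
    (integrable_integrand hW ξ hφ.1 (vol_cyl_lt_top c R)) (isOpen_cyl c R).measurableSet
    (fun x _ => hW.low x _)
  rw [setIntegral_const, vol_cyl c hR, smul_eq_mul, mul_comm] at h
  exact h

lemma bddBelow_en {W : V3 → M33 → ℝ} {m : ℝ} (hW : Good W m) (ξ : M32) (c : V2) {R : ℝ}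
    (hR : 0 ≤ R) : BddBelow (en W ξ c R '' patch c R) := by
  refine ⟨m * (2 * R) ^ 2, ?_⟩
  rintro _ ⟨φ, hφ, rfl⟩
  exact en_ge hW ξ c hR hφ

lemma zero_mem_patch (c : V2) (R : ℝ) : (fun _ => 0 : V3 → V3) ∈ patch c R :=
  ⟨⟨0, LipschitzWith.const _⟩, fun _ _ => rfl⟩

lemma cinf_le {W : V3 → M33 → ℝ} {m : ℝ} (hW : Good W m) (ξ : M32) (c : V2) {R : ℝ}
    (hR : 0 ≤ R) {φ : V3 → V3} (hφ : φ ∈ patch c R) : cinf W ξ c R ≤ en W ξ c R φ :=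
  csInf_le (bddBelow_en hW ξ c hR) ⟨φ, hφ, rfl⟩

lemma cinf_ge {W : V3 → M33 → ℝ} {m : ℝ} (hW : Good W m) (ξ : M32) (c : V2) {R : ℝ}
    (hR : 0 ≤ R) : m * (2 * R) ^ 2 ≤ cinf W ξ c R := by
  refine le_csInf ⟨_, _, zero_mem_patch c R, rfl⟩ ?_
  rintro _ ⟨φ, hφ, rfl⟩
  exact en_ge hW ξ c hR hφ

lemma exists_en_lt (W : V3 → M33 → ℝ) (ξ : M32) (c : V2) (R : ℝ)
    {a : ℝ} (ha : cinf W ξ c R < a) : ∃ φ ∈ patch c R, en W ξ c R φ < a := by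
  have hne : (en W ξ c R '' patch c R).Nonempty := ⟨_, _, zero_mem_patch c R, rfl⟩
  obtain ⟨_, ⟨φ, hφ, rfl⟩, h⟩ := exists_lt_of_csInf_lt hne ha
  exact ⟨φ, hφ, h⟩

lemma gradm_const (a : V3) (x : V3) : gradm (fun _ => a) x = 0 := by
  ext i j
  simp [gradm]

lemma cinf_le_of_bound {W : V3 → M33 → ℝ} {m : ℝ} (hW : Good W m) (ξ : M32) (c : V2) {R : ℝ}
    (hR : 0 ≤ R) {C : ℝ} (hC : ∀ x, W x (withCol ξ 0) ≤ C) :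
    cinf W ξ c R ≤ C * (2 * R) ^ 2 := by
  refine (cinf_le hW ξ c hR (zero_mem_patch c R)).trans ?_
  have h := setIntegral_mono_on (μ := volume) (s := cyl c R) (g := fun _ => C)
    (integrable_integrand hW ξ (zero_mem_patch c R).1 (vol_cyl_lt_top c R))
    (integrableOn_const (vol_cyl_lt_top c R).ne) (isOpen_cyl c R).measurableSet
    (fun x _ => by rw [gradm_const]; exact hC x)
  rw [setIntegral_const, vol_cyl c hR, smul_eq_mul, mul_comm] at h
  exact h

/-! ### Subadditivity of the infima, truncation and periodicity -/

lemma lipschitz_sum {E ι : Type*} [PseudoEMetricSpace E] (s : Finset ι) {φ : ι → E → V3}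
    (h : ∀ i ∈ s, ∃ K : NNReal, LipschitzWith K (φ i)) :
    ∃ K : NNReal, LipschitzWith K fun x => ∑ i ∈ s, φ i x := by
  classical
  induction s using Finset.induction_on with
  | empty => exact ⟨0, by simp⟩
  | insert a s ha ih =>
    obtain ⟨K, hK⟩ := ih fun i hi => h i (Finset.mem_insert_of_mem hi)
    obtain ⟨K', hK'⟩ := h a (Finset.mem_insert_self a s)
    refine ⟨K' + K, ?_⟩
    simp only [Finset.sum_insert ha]
    exact hK'.add hK

lemma withCol_add (ξ A : M32) (B : M33) :
    withCol ξ (withCol A 0 + B) = withCol (ξ + A) B := by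
  ext i j
  simp only [withCol, Matrix.of_apply, Matrix.add_apply, Matrix.zero_apply]
  split_ifs <;> ring

lemma gradm_add {u v : V3 → V3} {x : V3} (hu : DifferentiableAt ℝ u x)
    (hv : DifferentiableAt ℝ v x) :
    gradm (fun z => u z + v z) x = gradm u x + gradm v x := by
  ext i j
  simp [gradm, fderiv_fun_add hu hv]

/-- Glueing: a base map `v` which is affine with planar gradient `A i` on disjoint squares is
modified by a patch on each of them. Off these squares the energy density of `v` is at most `C`. -/
lemma assemble {W : V3 → M33 → ℝ} {m : ℝ} (hW : Good W m) (ξ : M32) (c : V2) {R : ℝ} (hR : 0 ≤ R)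
    {ι : Type*} (s : Finset ι) (cc : ι → V2) (RR : ι → ℝ) (hRR : ∀ i ∈ s, 0 ≤ RR i)
    {v : V3 → V3} (hv : v ∈ patch c R) (A : ι → M32)
    (hsub : ∀ i ∈ s, ∀ p : V2, ‖p - cc i‖ < RR i → ‖p - c‖ < R)
    (hdisj : ∀ i ∈ s, ∀ j ∈ s, i ≠ j → ∀ p : V2, ‖p - cc i‖ < RR i → ¬ ‖p - cc j‖ < RR j)
    (hvA : ∀ i ∈ s, ∀ x, ‖pl x - cc i‖ < RR i → gradm v x = withCol (A i) 0)
    {φ : ι → V3 → V3} (hφ : ∀ i ∈ s, φ i ∈ patch (cc i) (RR i))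
    {C : ℝ} (hC : ∀ x, W x (withCol ξ (gradm v x)) ≤ C) :
    cinf W ξ c R ≤ ∑ i ∈ s, en W (ξ + A i) (cc i) (RR i) (φ i)
      + C * ((2 * R) ^ 2 - ∑ i ∈ s, (2 * RR i) ^ 2) := by
  classical
  obtain ⟨Kv, hKv⟩ := hv.1
  obtain ⟨Ks, hKs⟩ := lipschitz_sum s fun i hi => (hφ i hi).1
  set u : V3 → V3 := fun x => v x + ∑ i ∈ s, φ i x with hu
  have hzero : ∀ i ∈ s, ∀ x, RR i ≤ ‖pl x - cc i‖ → φ i x = 0 := fun i hi => (hφ i hi).2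
  have huL : ∃ K : NNReal, LipschitzWith K u := ⟨_, hKv.add hKs⟩
  have hup : u ∈ patch c R := by
    refine ⟨huL, fun x hx => ?_⟩
    have h1 : ∀ i ∈ s, φ i x = 0 := fun i hi => hzero i hi x (by
      by_contra hlt
      exact absurd (hsub i hi _ (not_le.1 hlt)) (not_lt.2 hx))
    simp only [hu, hv.2 x hx, Finset.sum_eq_zero h1, add_zero]
  refine (cinf_le hW ξ c hR hup).trans ?_
  set F : V3 → ℝ := fun x => W x (withCol ξ (gradm u x)) with hF
  have hcont : ∀ i, Continuous fun x : V3 => ‖pl x - cc i‖ := fun i => by fun_prop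
  have hmeas : ∀ i, MeasurableSet (cyl (cc i) (RR i)) := fun i => (isOpen_cyl _ _).measurableSet
  set P : Set V3 := ⋃ i ∈ s, cyl (cc i) (RR i) with hP
  have hPm : MeasurableSet P := Finset.measurableSet_biUnion _ fun i _ => hmeas i
  have hPsub : P ⊆ cyl c R := by
    refine Set.iUnion₂_subset fun i hi x hx => ?_
    exact ⟨hsub i hi _ hx.1, hx.2⟩
  have hpd : (s : Set ι).Pairwise (Function.onFun Disjoint fun i => cyl (cc i) (RR i)) := by
    intro i hi j hj hij
    refine Set.disjoint_left.2 fun x hx hx' => ?_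
    exact hdisj i hi j hj hij _ hx.1 hx'.1
  have hFint : ∀ {S : Set V3}, volume S < ⊤ → IntegrableOn F S := fun hS =>
    integrable_integrand hW ξ huL hS
  have hvolP : volume.real P = ∑ i ∈ s, (2 * RR i) ^ 2 := by
    rw [hP, measureReal_biUnion_finset hpd (fun i _ => hmeas i)
      (fun i _ => (vol_cyl_lt_top _ _).ne)]
    exact Finset.sum_congr rfl fun i hi => vol_cyl _ (hRR i hi)
  have hvolrest : volume.real (cyl c R \ P) = (2 * R) ^ 2 - ∑ i ∈ s, (2 * RR i) ^ 2 := by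
    rw [measureReal_sdiff hPsub hPm (vol_cyl_lt_top _ _).ne,
      hvolP, vol_cyl _ hR]
  -- on each square only one patch is nonzero and the gradients add up
  have hinner : ∀ i ∈ s, ∫ x in cyl (cc i) (RR i), F x = en W (ξ + A i) (cc i) (RR i) (φ i) := by
    intro i hi
    obtain ⟨Ki, hKi⟩ := (hφ i hi).1
    refine setIntegral_congr_ae (hmeas i) ?_
    filter_upwards [hKv.ae_differentiableAt (μ := volume),
      hKi.ae_differentiableAt (μ := volume)] with x hdv hdφ hx
    have hloc : u =ᶠ[nhds x] fun z => v z + φ i z := by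
      filter_upwards [(isOpen_cyl (cc i) (RR i)).mem_nhds hx] with z hz
      simp only [hu]
      rw [Finset.sum_eq_single i]
      · intro j hj hji
        exact hzero j hj z (not_lt.1 (hdisj i hi j hj hji.symm _ hz.1))
      · exact fun h => absurd hi h
    simp only [hF]
    rw [gradm_congr hloc, gradm_add hdv hdφ, hvA i hi x hx.1, withCol_add]
  -- off the closed squares the glued map coincides locally with `v`; their boundaries are null sets
  have houter : ∫ x in cyl c R \ P, F x ≤ C * ((2 * R) ^ 2 - ∑ i ∈ s, (2 * RR i) ^ 2) := by
    have hlt : volume (cyl c R \ P) < ⊤ :=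
      (measure_mono Set.sdiff_subset).trans_lt (vol_cyl_lt_top c R)
    have hb : ∀ᵐ x : V3, ∀ i ∈ s, ‖pl x - cc i‖ ≠ RR i :=
      (Finset.eventually_all s).2 fun i _ => ae_ne_bdry (cc i) (RR i)
    have h := setIntegral_mono_on_ae (μ := volume) (f := F) (g := fun _ => C) (hFint hlt)
      (integrableOn_const hlt.ne) ((isOpen_cyl c R).measurableSet.diff hPm) ?_
    · rwa [setIntegral_const, hvolrest, smul_eq_mul, mul_comm] at h
    · filter_upwards [hb] with x hxb hx
      have hfar : ∀ i ∈ s, RR i < ‖pl x - cc i‖ := by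
        intro i hi
        refine lt_of_le_of_ne (not_lt.1 fun hl => hx.2 ?_) (hxb i hi).symm
        exact Set.mem_biUnion hi ⟨hl, hx.1.2⟩
      have hloc : u =ᶠ[nhds x] v := by
        have : ∀ᶠ z in nhds x, ∀ i ∈ s, RR i < ‖pl z - cc i‖ :=
          (Finset.eventually_all s).2 fun i hi =>
            (isOpen_lt continuous_const (hcont i)).mem_nhds (hfar i hi)
        filter_upwards [this] with z hz
        simp only [hu]
        rw [Finset.sum_eq_zero fun i hi => hzero i hi z (hz i hi).le, add_zero]
      simp only [hF]
      rw [gradm_congr hloc]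
      exact hC x
  have hsplit : en W ξ c R u = (∫ x in P, F x) + ∫ x in cyl c R \ P, F x := by
    have h := setIntegral_union (f := F) (μ := volume) (s := P) (t := cyl c R \ P)
      Set.disjoint_sdiff_right ((isOpen_cyl c R).measurableSet.diff hPm)
      (hFint ((measure_mono hPsub).trans_lt (vol_cyl_lt_top _ _)))
      (hFint ((measure_mono Set.sdiff_subset).trans_lt (vol_cyl_lt_top _ _)))
    rw [Set.union_sdiff_cancel hPsub] at h
    exact h
  rw [hsplit, hP, integral_biUnion_finset s (fun i _ => hmeas i) hpd
    (fun i _ => hFint (vol_cyl_lt_top _ _)), Finset.sum_congr rfl hinner]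
  exact add_le_add le_rfl houter

/-- Subadditivity of the localized infima, from `assemble` with nearly optimal patches. -/
lemma cinf_subadd {W : V3 → M33 → ℝ} {m : ℝ} (hW : Good W m) (ξ : M32) (c : V2) {R : ℝ}
    (hR : 0 ≤ R)
    {ι : Type*} (s : Finset ι) (cc : ι → V2) (RR : ι → ℝ) (hRR : ∀ i ∈ s, 0 ≤ RR i)
    {v : V3 → V3} (hv : v ∈ patch c R) (A : ι → M32)
    (hsub : ∀ i ∈ s, ∀ p : V2, ‖p - cc i‖ < RR i → ‖p - c‖ < R)
    (hdisj : ∀ i ∈ s, ∀ j ∈ s, i ≠ j → ∀ p : V2, ‖p - cc i‖ < RR i → ¬ ‖p - cc j‖ < RR j)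
    (hvA : ∀ i ∈ s, ∀ x, ‖pl x - cc i‖ < RR i → gradm v x = withCol (A i) 0)
    {C : ℝ} (hC : ∀ x, W x (withCol ξ (gradm v x)) ≤ C) :
    cinf W ξ c R ≤ ∑ i ∈ s, cinf W (ξ + A i) (cc i) (RR i)
      + C * ((2 * R) ^ 2 - ∑ i ∈ s, (2 * RR i) ^ 2) := by
  refine le_of_forall_pos_le_add fun ε hε => ?_
  have hδ : 0 < ε / (s.card + 1) := by positivity
  have hex : ∀ i, ∃ φ ∈ patch (cc i) (RR i),
      en W (ξ + A i) (cc i) (RR i) φ < cinf W (ξ + A i) (cc i) (RR i) + ε / (s.card + 1) :=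
    fun i => exists_en_lt W _ _ _ (lt_add_of_pos_right _ hδ)
  choose φ hφ hlt using hex
  have h := assemble hW ξ c hR s cc RR hRR hv A hsub hdisj hvA (fun i _ => hφ i) hC
  have h2 : ∑ i ∈ s, en W (ξ + A i) (cc i) (RR i) (φ i) ≤
      ∑ i ∈ s, cinf W (ξ + A i) (cc i) (RR i) + ε := by
    calc _ ≤ ∑ i ∈ s, (cinf W (ξ + A i) (cc i) (RR i) + ε / (s.card + 1)) :=
          Finset.sum_le_sum fun i _ => (hlt i).le
      _ = ∑ i ∈ s, cinf W (ξ + A i) (cc i) (RR i) + s.card * (ε / (s.card + 1)) := by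
          rw [Finset.sum_add_distrib, Finset.sum_const, nsmul_eq_mul]
      _ ≤ _ := by
          gcongr
          rw [mul_div_assoc', div_le_iff₀ (by positivity)]
          nlinarith
  linarith

/-- Componentwise truncation of a vector at height `τ`. -/
def clampv (τ : ℝ) (v : V3) : V3 := fun i => max (min (v i) τ) (-τ)

lemma clampv_zero (v : V3) : clampv 0 v = 0 := by
  ext i
  simp [clampv]

lemma clampv_eq {τ : ℝ} {v : V3} (h : ‖v‖ ≤ τ) : clampv τ v = v := by
  ext i
  have h1 := abs_le.1 ((norm_le_pi_norm v i).trans h)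
  simp [clampv, h1.1, h1.2]

lemma lipschitz_clampv {E : Type*} [PseudoEMetricSpace E] {τ : E → ℝ} {h : E → V3}
    {K K' : NNReal} (hτ : LipschitzWith K τ) (hh : LipschitzWith K' h) :
    LipschitzWith (max K' K) fun x => clampv (τ x) (h x) := by
  intro x y
  refine edist_pi_le_iff.2 fun i => ?_
  have hi : LipschitzWith K' fun x => h x i := fun x y =>
    (edist_le_pi_edist (h x) (h y) i).trans (hh x y)
  have := ((hi.min hτ).max hτ.neg) x y
  simpa [clampv] using this

/-- The profile `K (R - ‖p - c‖)⁺`, used as the truncation height in `clampv`. -/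
lemma lipschitz_profile {E : Type*} [SeminormedAddCommGroup E] (K : NNReal) (c : E) (R : ℝ) :
    LipschitzWith K fun p : E => (K : ℝ) * max (R - ‖p - c‖) 0 := by
  refine LipschitzWith.of_dist_le_mul fun x y => ?_
  rw [Real.dist_eq, ← mul_sub, abs_mul, abs_of_nonneg K.coe_nonneg]
  refine mul_le_mul_of_nonneg_left ?_ K.2
  refine (abs_max_sub_max_le_abs _ _ _).trans ?_
  have h := abs_norm_sub_norm_le (y - c) (x - c)
  rw [show R - ‖x - c‖ - (R - ‖y - c‖) = ‖y - c‖ - ‖x - c‖ by ring, dist_comm, dist_eq_norm]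
  simpa using h

lemma norm_fin2_eq (p : V2) : ‖p‖ = max |p 0| |p 1| := by
  apply le_antisymm
  · refine (pi_norm_le_iff_of_nonneg (by positivity)).2 fun i => ?_
    fin_cases i
    · exact le_max_left _ _
    · exact le_max_right _ _
  · exact max_le (norm_le_pi_norm p 0) (norm_le_pi_norm p 1)

lemma openCyl_eq (t : ℝ) : openCyl t = cyl 0 (t / 2) := by
  ext x
  simp [openCyl, cyl, norm_fin2_eq, and_assoc]

lemma latBdry_iff (t : ℝ) (x : V3) : x ∈ latBdry t ↔ ‖pl x‖ = t / 2 ∧ |x 2| < 1 / 2 := by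
  simp [latBdry, norm_fin2_eq]

/-- Every point `p` of the closed ball of radius `R` lies within `R - ‖p‖` of its sphere, so that a
`K`-Lipschitz map vanishing on the sphere is at most `K (R - ‖p‖)` at `p`. -/
lemma exists_radial (p : V2) {R : ℝ} (hp : ‖p‖ ≤ R) :
    ∃ q : V2, ‖q‖ = R ∧ ‖p - q‖ ≤ R - ‖p‖ := by
  have hR : 0 ≤ R := (norm_nonneg p).trans hp
  rcases eq_or_ne p 0 with h | h
  · refine ⟨fun _ => R, ?_, ?_⟩
    · rw [norm_fin2_eq]; simp [abs_of_nonneg hR]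
    · rw [h, zero_sub, norm_neg, norm_zero, norm_fin2_eq]; simp [abs_of_nonneg hR]
  · have h0 : 0 < ‖p‖ := norm_pos_iff.2 h
    refine ⟨(R / ‖p‖) • p, ?_, ?_⟩
    · rw [norm_smul, Real.norm_eq_abs, abs_of_nonneg (by positivity)]
      field_simp
    · have : p - (R / ‖p‖) • p = (1 - R / ‖p‖) • p := by rw [sub_smul, one_smul]
      rw [this, norm_smul, Real.norm_eq_abs, abs_of_nonpos]
      · apply le_of_eq; field_simp; ring
      · rw [sub_nonpos, le_div_iff₀ h0]; linarith

/-- The infimum over `AdmSet t` is the infimum over patches on the same cylinder: truncating an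
admissible map at the height `K (t/2 - ‖x_α‖)⁺` does not change it inside the cylinder. -/
lemma cellInf_eq (W : V3 → M33 → ℝ) (ξ : M32) (t : ℝ) :
    cellInf W ξ t (AdmSet t) = cinf W ξ 0 (t / 2) := by
  have hsub : patch 0 (t / 2) ⊆ AdmSet t := by
    rintro φ ⟨hφ, h0⟩
    refine ⟨hφ, fun x hx => h0 x ?_⟩
    rw [sub_zero]
    exact ((latBdry_iff t x).1 hx).1.ge
  have hcell : ∀ φ, cellE W ξ t φ = en W ξ 0 (t / 2) φ := fun φ => by
    rw [cellE, openCyl_eq, en]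
  have himg : (fun φ => cellE W ξ t φ) '' AdmSet t = en W ξ 0 (t / 2) '' patch 0 (t / 2) := by
    apply Set.Subset.antisymm
    · rintro _ ⟨φ, ⟨⟨K, hK⟩, h0⟩, rfl⟩
      set τ : V3 → ℝ := fun x => (K : ℝ) * max (t / 2 - ‖pl x - 0‖) 0 with hτ
      have hτL : LipschitzWith (K * 1) τ := (lipschitz_profile K (0 : V2) (t / 2)).comp lipschitz_pl
      refine ⟨fun x => clampv (τ x) (φ x), ⟨⟨_, lipschitz_clampv hτL hK⟩, ?_⟩, ?_⟩
      · intro x hx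
        have : τ x = 0 := by
          simp only [hτ]
          rw [max_eq_right (by linarith), mul_zero]
        simp only [this, clampv_zero]
      · simp only [hcell]
        refine setIntegral_congr_fun (isOpen_cyl _ _).measurableSet fun x hx => ?_
        have hloc : (fun x => clampv (τ x) (φ x)) =ᶠ[nhds x] φ := by
          filter_upwards [(isOpen_cyl 0 (t / 2)).mem_nhds hx] with z hz
          apply clampv_eq
          have hz1 : ‖pl z‖ < t / 2 := by simpa using hz.1
          obtain ⟨q, hq, hpq⟩ := exists_radial (pl z) hz1.le
          set w : V3 := ![q 0, q 1, z 2] with hw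
          have hplw : pl w = q := by
            ext i; fin_cases i <;> simp [hw]
          have hw0 : φ w = 0 := h0 w ((latBdry_iff t w).2 ⟨by rw [hplw, hq], by simpa [hw] using hz.2⟩)
          have hzw : ‖z - w‖ ≤ ‖pl z - q‖ := by
            refine (pi_norm_le_iff_of_nonneg (norm_nonneg _)).2 fun i => ?_
            fin_cases i
            · exact norm_le_pi_norm (pl z - q) 0
            · exact norm_le_pi_norm (pl z - q) 1
            · simp [hw]
          have h1 := hK.dist_le_mul z w
          rw [hw0, dist_zero_right, dist_eq_norm] at h1
          refine h1.trans (mul_le_mul_of_nonneg_left ?_ K.2)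
          rw [sub_zero]
          exact (hzw.trans hpq).trans (le_max_left _ _)
        simp only [gradm_congr hloc]
    · rintro _ ⟨φ, hφ, rfl⟩
      exact ⟨φ, hsub hφ, hcell φ⟩
  rw [cellInf, himg, cinf]

/-- Invariance under integer planar translations, from the periodicity of `W`. -/
lemma cinf_translate {W : V3 → M33 → ℝ} {m : ℝ} (hW : Good W m) (ξ : M32) (a b : ℤ) {R : ℝ}
    (hR : 0 ≤ R) : cinf W ξ ![(a : ℝ), (b : ℝ)] R ≤ cinf W ξ 0 R := by
  set Z : V3 := ![(a : ℝ), (b : ℝ), 0] with hZ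
  have hplZ : pl Z = ![(a : ℝ), (b : ℝ)] := by
    ext i; fin_cases i <;> simp [hZ]
  have hper : ∀ x η, W (x + Z) η = W x η := by
    intro x η
    have h0 : Function.Periodic (fun x => W x η) (Pi.single (0 : Fin 3) (1 : ℝ)) := fun x =>
      hW.per x η 0 (by simp)
    have h1 : Function.Periodic (fun x => W x η) (Pi.single (1 : Fin 3) (1 : ℝ)) := fun x =>
      hW.per x η 1 (by simp)
    have h := (h0.zsmul a).add_period (h1.zsmul b) x
    have hZ' : Z = a • (Pi.single (0 : Fin 3) (1 : ℝ) : V3) + b • (Pi.single (1 : Fin 3) (1 : ℝ)) := by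
      ext i; fin_cases i <;> simp [hZ]
    rw [hZ']
    exact h
  refine le_csInf ⟨_, _, zero_mem_patch _ _, rfl⟩ ?_
  rintro _ ⟨φ, ⟨⟨K, hK⟩, h0⟩, rfl⟩
  have hmem : (fun x => φ (x - Z)) ∈ patch ![(a : ℝ), (b : ℝ)] R := by
    refine ⟨⟨K, LipschitzWith.of_dist_le_mul fun x y => ?_⟩, fun x hx => h0 _ ?_⟩
    · simpa using hK.dist_le_mul (x - Z) (y - Z)
    · rw [map_sub, hplZ, sub_zero]; exact hx
  refine (cinf_le hW ξ _ hR hmem).trans (le_of_eq ?_)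
  have hmp := measurePreserving_add_right (volume : Measure V3) Z
  have h := hmp.setIntegral_preimage_emb (MeasurableEquiv.addRight Z).measurableEmbedding
    (fun x => W x (withCol ξ (gradm (fun x => φ (x - Z)) x))) (cyl ![(a : ℝ), (b : ℝ)] R)
  rw [en, ← h, en]
  have hset : (fun x => x + Z) ⁻¹' cyl ![(a : ℝ), (b : ℝ)] R = cyl 0 R := by
    ext x
    simp only [cyl, Set.mem_preimage, Set.mem_ofPred_eq, map_add, hplZ, add_sub_cancel_right,
      sub_zero]
    simp [hZ]
  rw [hset]
  refine setIntegral_congr_fun (isOpen_cyl _ _).measurableSet fun x _ => ?_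
  have hg : gradm (fun x => φ (x - Z)) (x + Z) = gradm φ x := by
    simp only [gradm, fderiv_comp_sub, add_sub_cancel_right]
  simp only [hg, hper]

/-! ### The homogenized density as a limit, and its measurability -/

/-- The scaled cell infimum whose lower limit is `homDens`. -/
def scal (W : V3 → M33 → ℝ) (ξ : M32) (t : ℝ) : ℝ := (t ^ 2)⁻¹ * cellInf W ξ t (AdmSet t)

lemma scal_mul (W : V3 → M33 → ℝ) (ξ : M32) {t : ℝ} (ht : 0 < t) :
    cinf W ξ 0 (t / 2) = t ^ 2 * scal W ξ t := by
  rw [scal, cellInf_eq, mul_inv_cancel_left₀ (by positivity)]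

lemma scal_ge {W : V3 → M33 → ℝ} {m : ℝ} (hW : Good W m) (ξ : M32) {t : ℝ} (ht : 0 < t) :
    m ≤ scal W ξ t := by
  have h := cinf_ge hW ξ 0 (R := t / 2) (by positivity)
  rw [scal_mul W ξ ht, mul_div_cancel₀ _ (two_ne_zero), mul_comm] at h
  exact le_of_mul_le_mul_left h (by positivity)

lemma scal_le {W : V3 → M33 → ℝ} {m : ℝ} (hW : Good W m) (ξ : M32) {t : ℝ} (ht : 0 < t)
    {C : ℝ} (hC : ∀ x, W x (withCol ξ 0) ≤ C) : scal W ξ t ≤ C := by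
  have h := cinf_le_of_bound hW ξ 0 (R := t / 2) (by positivity) hC
  rw [scal_mul W ξ ht, mul_div_cancel₀ _ (two_ne_zero), mul_comm C] at h
  exact le_of_mul_le_mul_left h (by positivity)

lemma exists_C {W : V3 → M33 → ℝ} {m : ℝ} (hW : Good W m) (r : ℝ) (hr : 0 ≤ r) :
    ∃ C : ℝ, ∀ ξ : M32, (∀ i j, |ξ i j| ≤ r) → ∀ x, W x (withCol ξ 0) ≤ C := by
  obtain ⟨C, hC⟩ := hW.up (r + 0)
  exact ⟨C, fun ξ hξ x => hC x _ (abs_withCol_le hr hξ (by simp))⟩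

lemma isBounded_ge {W : V3 → M33 → ℝ} {m : ℝ} (hW : Good W m) (ξ : M32) :
    IsBoundedUnder (· ≥ ·) atTop (scal W ξ) :=
  ⟨m, by
    rw [eventually_map]
    filter_upwards [eventually_gt_atTop 0] with t ht using scal_ge hW ξ ht⟩

lemma isBounded_le {W : V3 → M33 → ℝ} {m : ℝ} (hW : Good W m) (ξ : M32) :
    IsBoundedUnder (· ≤ ·) atTop (scal W ξ) := by
  obtain ⟨r, hr0, hr⟩ := exists_bound ξ
  obtain ⟨C, hC⟩ := exists_C hW r hr0
  refine ⟨C, ?_⟩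
  rw [eventually_map]
  filter_upwards [eventually_gt_atTop 0] with t ht using scal_le hW ξ ht (hC ξ hr)

lemma homDens_ge {W : V3 → M33 → ℝ} {m : ℝ} (hW : Good W m) (ξ : M32) : m ≤ homDens W ξ := by
  refine le_liminf_of_le (isBounded_le hW ξ).isCoboundedUnder_ge ?_
  filter_upwards [eventually_gt_atTop 0] with t ht using scal_ge hW ξ ht

lemma homDens_le {W : V3 → M33 → ℝ} {m : ℝ} (hW : Good W m) (ξ : M32) {C : ℝ}
    (hC : ∀ x, W x (withCol ξ 0) ≤ C) : homDens W ξ ≤ C := by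
  refine liminf_le_of_frequently_le (Eventually.frequently ?_) (isBounded_ge hW ξ)
  filter_upwards [eventually_gt_atTop 0] with t ht using scal_le hW ξ ht hC

/-- Arithmetic of the tiling by cells of side `t` placed on the lattice of mesh `n = ⌈t⌉`: the
cells cover all but a fraction `2δ` of the square. -/
lemma tiling_arith {t R δ : ℝ} {n M : ℕ} (ht : 0 < t) (hδ0 : 0 < δ)
    (hn1 : (n : ℝ) < t + 1) (hn0 : 0 < (n : ℝ)) (hM : 2 * R / n - 2 ≤ M)
    (h1 : 2 ≤ δ * t) (h2 : 2 * t ≤ δ * R) (hδ : δ < 1) :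
    (2 * R) ^ 2 * (1 - 2 * δ) ≤ (M : ℝ) ^ 2 * t ^ 2 := by
  have hR : 0 < R := by
    by_contra h
    nlinarith
  have hq : 1 - δ / 2 ≤ t / n := by
    rw [le_div_iff₀ hn0]
    nlinarith
  have h3 : 2 * R * (1 - δ) ≤ M * t := by
    calc 2 * R * (1 - δ) ≤ 2 * R * (1 - δ / 2) - 2 * t := by nlinarith
      _ ≤ 2 * R * (t / n) - 2 * t := by gcongr
      _ = (2 * R / n - 2) * t := by ring
      _ ≤ M * t := by gcongr
  have h4 : (2 * R * (1 - δ)) ^ 2 ≤ (M * t) ^ 2 := by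
    apply pow_le_pow_left₀ _ h3
    have : 0 < 1 - δ := by linarith
    positivity
  nlinarith [mul_nonneg (sq_nonneg R) (sq_nonneg δ)]

/-- On every sufficiently large square, wherever centred, the infimum per unit area is at most
`homDens W ξ + ε`: the square is tiled by integer translates of one nearly optimal cell. -/
lemma cinf_le_homDens {W : V3 → M33 → ℝ} {m : ℝ} (hW : Good W m) (ξ : M32) {ε : ℝ} (hε : 0 < ε) :
    ∃ R₀ : ℝ, ∀ c : V2, ∀ R, R₀ ≤ R → cinf W ξ c R ≤ (2 * R) ^ 2 * (homDens W ξ + ε) := by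
  obtain ⟨r, hr0, hr⟩ := exists_bound ξ
  obtain ⟨C₀, hC₀⟩ := exists_C hW r hr0
  set a := homDens W ξ + ε / 2 with ha
  set C := max C₀ a with hCdef
  have hCa : a ≤ C := le_max_right _ _
  have hC : ∀ x, W x (withCol ξ 0) ≤ C := fun x => (hC₀ ξ hr x).trans (le_max_left _ _)
  -- `δ` makes the untiled fraction `2δ`, of energy density at most `C`, cost at most `ε / 2`
  set δ := min (1 / 2) (ε / (4 * (C - a + 1))) with hδdef
  have hden : 0 < 4 * (C - a + 1) := by linarith
  have hδ0 : 0 < δ := lt_min (by norm_num) (by positivity)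
  have hδ1 : δ < 1 := (min_le_left _ _).trans_lt (by norm_num)
  have hδε : (C - a) * (2 * δ) ≤ ε / 2 := by
    have h : δ ≤ ε / (4 * (C - a + 1)) := min_le_right _ _
    rw [le_div_iff₀ hden] at h
    nlinarith
  have hfreq : ∃ᶠ t in atTop, scal W ξ t < a :=
    frequently_lt_of_liminf_lt (isBounded_le hW ξ).isCoboundedUnder_ge
      (show homDens W ξ < a by linarith)
  obtain ⟨t, hta, ht1, ht0⟩ := (hfreq.and_eventually
    ((eventually_ge_atTop (2 / δ)).and (eventually_gt_atTop 0))).exists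
  have h1 : 2 ≤ δ * t := by
    rw [div_le_iff₀ hδ0] at ht1; linarith
  set n := ⌈t⌉₊ with hn
  have hnt : t ≤ n := Nat.le_ceil t
  have hn1 : (n : ℝ) < t + 1 := Nat.ceil_lt_add_one ht0.le
  have hn0 : (0 : ℝ) < n := ht0.trans_le hnt
  refine ⟨2 * t / δ, fun c R hR => ?_⟩
  have h2 : 2 * t ≤ δ * R := by
    rw [div_le_iff₀ hδ0] at hR; linarith
  have hR0 : 0 < R := by
    by_contra h
    nlinarith
  set M := ⌊2 * R / n⌋₊ - 1 with hM
  have hM1 : 2 * R / n - 2 ≤ M := by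
    have h := Nat.lt_floor_add_one (2 * R / n)
    have h' : (⌊2 * R / n⌋₊ : ℝ) ≤ M + 1 := by exact_mod_cast (by omega)
    linarith
  have hM2 : (M : ℝ) = 0 ∨ (M : ℝ) + 1 ≤ 2 * R / n := by
    rcases Nat.eq_zero_or_pos M with h | h
    · left; exact_mod_cast h
    · right
      have h' : ((M + 1 : ℕ) : ℝ) ≤ ⌊2 * R / n⌋₊ := by
        exact_mod_cast (by omega)
      push_cast at h'
      exact h'.trans (Nat.floor_le (by positivity))
  have harith := tiling_arith ht0 hδ0 hn1 hn0 hM1 h1 h2 hδ1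
  -- the first lattice cell lying inside the square; cells are centred at points of `n ℤ²`
  set p : Fin 2 → ℤ := fun j => ⌈(c j - R) / n + 1 / 2⌉ with hp
  have hp1 : ∀ j, (c j - R) + n / 2 ≤ n * p j := fun j => by
    have h := Int.le_ceil ((c j - R) / n + 1 / 2)
    have h' := mul_le_mul_of_nonneg_left h hn0.le
    rw [mul_add, mul_div_cancel₀ _ hn0.ne'] at h'
    simp only [hp]; linarith
  have hp2 : ∀ j, n * p j < (c j - R) + n / 2 + n := fun j => by
    have h := Int.ceil_lt_add_one ((c j - R) / n + 1 / 2)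
    have h' := mul_lt_mul_of_pos_left h hn0
    rw [mul_add, mul_add, mul_div_cancel₀ _ hn0.ne'] at h'
    simp only [hp]; linarith
  set s : Finset (Fin 2 → Fin M) := Finset.univ with hs
  set cc : (Fin 2 → Fin M) → V2 := fun k =>
    ![(((n : ℤ) * (p 0 + (k 0 : ℕ)) : ℤ) : ℝ), (((n : ℤ) * (p 1 + (k 1 : ℕ)) : ℤ) : ℝ)] with hcc
  have hccj : ∀ k j, cc k j = n * (p j + (k j : ℕ)) := fun k j => by
    fin_cases j <;> simp [hcc]
  have hnear : ∀ k (q : V2), ‖q - cc k‖ < t / 2 → ∀ j, |q j - cc k j| < t / 2 := fun k q h j =>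
    (norm_le_pi_norm (q - cc k) j).trans_lt h
  have hsub := cinf_subadd hW ξ c hR0.le s cc (fun _ => t / 2) (fun _ _ => by positivity)
    (zero_mem_patch c R) (fun _ => 0) ?_ ?_ ?_ (C := C) ?_
  · have hterm : ∀ k ∈ s, cinf W (ξ + 0) (cc k) (t / 2) ≤ t ^ 2 * a := fun k _ => by
      rw [add_zero]
      refine (cinf_translate hW ξ _ _ (by positivity)).trans ?_
      rw [scal_mul W ξ ht0]
      gcongr
    have hsum := Finset.sum_le_sum hterm
    have hcard : (s.card : ℝ) = (M : ℝ) ^ 2 := by simp [hs]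
    rw [Finset.sum_const, nsmul_eq_mul, hcard] at hsum
    rw [Finset.sum_const, nsmul_eq_mul, hcard, mul_div_cancel₀ _ two_ne_zero] at hsub
    have h5 : (C - a) * ((2 * R) ^ 2 - (M : ℝ) ^ 2 * t ^ 2) ≤ (ε / 2) * (2 * R) ^ 2 := by
      calc _ ≤ (C - a) * ((2 * R) ^ 2 * (2 * δ)) := by
            apply mul_le_mul_of_nonneg_left _ (by linarith)
            linarith
        _ = ((C - a) * (2 * δ)) * (2 * R) ^ 2 := by ring
        _ ≤ _ := by gcongr
    have h6 : (2 * R) ^ 2 * (homDens W ξ + ε) = (2 * R) ^ 2 * a + (ε / 2) * (2 * R) ^ 2 := by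
      rw [ha]; ring
    nlinarith
  · intro k _ q hq
    have hMr : (M : ℝ) + 1 ≤ 2 * R / n := by
      refine hM2.resolve_left fun h => ?_
      have hM0 : M = 0 := by exact_mod_cast h
      have := (k 0).isLt
      omega
    rw [le_div_iff₀ hn0] at hMr
    refine (pi_norm_lt_iff hR0).2 fun j => ?_
    have hq := abs_lt.1 (hnear k q hq j)
    rw [hccj, mul_add] at hq
    have hk : ((k j : ℕ) : ℝ) + 1 ≤ M := by exact_mod_cast (k j).isLt
    have hk' := mul_le_mul_of_nonneg_left hk hn0.le
    have hk0 : (0 : ℝ) ≤ n * ((k j : ℕ) : ℝ) := by positivity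
    have e1 := hp1 j
    have e2 := hp2 j
    rw [Pi.sub_apply, Real.norm_eq_abs, abs_lt]
    rw [mul_add, mul_one] at hk'
    constructor <;> linarith [hq.1, hq.2]
  · intro k _ k' _ hkk q hq hq'
    apply hkk
    funext j
    have e1 := abs_lt.1 (hnear k q hq j)
    have e2 := abs_lt.1 (hnear k' q hq' j)
    rw [hccj, mul_add] at e1 e2
    have hlt : ∀ x y : ℕ, (n : ℝ) * x < n * y + n → x ≤ y := fun x y h => by
      have : (x : ℝ) < y + 1 := by
        by_contra hcon
        have := mul_le_mul_of_nonneg_left (not_lt.1 hcon) hn0.le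
        linarith
      exact Nat.lt_succ_iff.1 (by exact_mod_cast this)
    apply Fin.ext
    apply le_antisymm
    · apply hlt; linarith [e1.1, e1.2, e2.1, e2.2]
    · apply hlt; linarith [e1.1, e1.2, e2.1, e2.2]
  · intro k _ x _
    rw [gradm_const]
    ext i j
    simp [withCol]
  · intro x
    rw [gradm_const]
    exact hC x

/-- By `cinf_le_homDens` the lower limit defining `homDens` is a limit; along the integers it gives
a countable limit, as needed for measurability. -/
lemma tendsto_scal {W : V3 → M33 → ℝ} {m : ℝ} (hW : Good W m) (ξ : M32) :
    Tendsto (fun k : ℕ => scal W ξ k) atTop (nhds (homDens W ξ)) := by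
  have h : Tendsto (scal W ξ) atTop (nhds (homDens W ξ)) := by
    refine tendsto_of_le_liminf_of_limsup_le le_rfl ?_ (isBounded_le hW ξ) (isBounded_ge hW ξ)
    refine le_of_forall_pos_le_add fun ε hε => ?_
    obtain ⟨R₀, hR₀⟩ := cinf_le_homDens hW ξ hε
    refine limsup_le_of_le (isBounded_ge hW ξ).isCoboundedUnder_le ?_
    filter_upwards [eventually_ge_atTop (2 * R₀), eventually_gt_atTop 0] with t ht ht0
    have h := hR₀ 0 (t / 2) (by linarith)
    rw [scal_mul W ξ ht0, mul_div_cancel₀ _ two_ne_zero] at h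
    exact le_of_mul_le_mul_left h (by positivity)
  exact h.comp tendsto_natCast_atTop_atTop

lemma continuous_cellE {W : V3 → M33 → ℝ} {m : ℝ} (hW : Good W m) {φ : V3 → V3}
    (hφ : ∃ K : NNReal, LipschitzWith K φ) (t : ℝ) :
    Continuous fun ξ : Fin 3 → Fin 2 → ℝ => cellE W (Matrix.of ξ) t φ := by
  obtain ⟨K, hK⟩ := hφ
  rw [continuous_iff_continuousAt]
  intro ξ₀
  obtain ⟨C, hC⟩ := hW.up (‖ξ₀‖ + 1 + K)
  have hfin : volume (openCyl t) ≠ ⊤ := by rw [openCyl_eq]; exact (vol_cyl_lt_top _ _).ne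
  refine continuousAt_of_dominated (bound := fun _ => max |m| |C|) ?_ ?_
    (integrableOn_const hfin) ?_
  · exact Eventually.of_forall fun ξ => (measurable_integrand hW.car _ φ).aestronglyMeasurable
  · filter_upwards [Metric.ball_mem_nhds ξ₀ one_pos] with ξ hξ
    refine ae_of_all _ fun x => ?_
    have hb : ∀ i j, |Matrix.of ξ i j| ≤ ‖ξ₀‖ + 1 := fun i j => by
      have h1 : ‖ξ‖ ≤ ‖ξ₀‖ + 1 := by
        have := norm_le_norm_add_norm_sub' ξ ξ₀
        rw [mem_ball_iff_norm] at hξ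
        linarith
      exact ((norm_le_pi_norm (ξ i) j).trans (norm_le_pi_norm ξ i)).trans h1
    exact abs_le_max_abs_abs (hW.low x _) (hC x _ (abs_withCol_le (by positivity) hb
      (abs_gradm_le (norm_fderiv_le_of_lipschitz ℝ (x₀ := x) hK))))
  · refine ae_of_all _ fun x => Continuous.continuousAt ?_
    refine (hW.car.2 x).comp ?_
    refine continuous_pi fun i => continuous_pi fun j => ?_
    simp only [withCol, Matrix.of_apply]
    split_ifs <;> fun_prop

/-- Stated on functions `Fin 3 → Fin 2 → ℝ`, since matrices carry no σ-algebra. The homogenized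
density is a countable limit of the cell infima, which are upper semicontinuous. -/
lemma measurable_homDens {W : V3 → M33 → ℝ} {m : ℝ} (hW : Good W m) :
    Measurable fun ξ : Fin 3 → Fin 2 → ℝ => homDens W (Matrix.of ξ) := by
  refine measurable_of_tendsto_metrizable (f := fun (k : ℕ) (ξ : Fin 3 → Fin 2 → ℝ) =>
    scal W (Matrix.of ξ) k) (fun k => ?_) (tendsto_pi_nhds.2 fun ξ => tendsto_scal hW _)
  refine Measurable.const_mul ?_ _
  -- an infimum of continuous functions is upper semicontinuous
  refine UpperSemicontinuous.measurable ?_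
  intro ξ a hξ
  have h0 : (fun _ => 0 : V3 → V3) ∈ AdmSet (k : ℝ) := ⟨⟨0, LipschitzWith.const _⟩, fun _ _ => rfl⟩
  have hne : ((fun φ => cellE W (Matrix.of ξ) k φ) '' AdmSet (k : ℝ)).Nonempty := ⟨_, _, h0, rfl⟩
  obtain ⟨_, ⟨φ, hφ, rfl⟩, hlt⟩ := exists_lt_of_csInf_lt hne hξ
  filter_upwards [(continuous_cellE hW hφ.1 k).continuousAt.eventually_lt continuousAt_const hlt]
    with η hη
  refine lt_of_le_of_lt (csInf_le ⟨m * volume.real (openCyl (k : ℝ)), ?_⟩ ⟨φ, hφ, rfl⟩) hη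
  rintro _ ⟨φ', hφ', rfl⟩
  have hfin : volume (openCyl (k : ℝ)) < ⊤ := by rw [openCyl_eq]; exact vol_cyl_lt_top _ _
  have h := setIntegral_mono_on (μ := volume) (s := openCyl (k : ℝ)) (f := fun _ => m)
    (integrableOn_const hfin.ne)
    (integrable_integrand hW (Matrix.of η) hφ'.1 hfin)
    (by rw [openCyl_eq]; exact (isOpen_cyl _ _).measurableSet)
    (fun x _ => hW.low x _)
  rw [setIntegral_const, smul_eq_mul, mul_comm] at h
  exact h

/-! ### Coverings by small squares and locally affine approximation -/

lemma sq2_eq : sq2 = Metric.ball (0 : V2) (1 / 2) := by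
  ext p
  simp [sq2, norm_fin2_eq]

lemma vol_closedBall (p : V2) {ρ : ℝ} (hρ : 0 ≤ ρ) :
    volume.real (Metric.closedBall p ρ) = (2 * ρ) ^ 2 := by
  rw [Measure.real, Real.volume_pi_closedBall p hρ, ENNReal.toReal_ofReal (by positivity)]
  simp

lemma vol_sq2 : volume (Metric.ball (0 : V2) (1 / 2)) = 1 := by
  rw [Real.volume_pi_ball 0 (by norm_num)]
  simp

/-- Besicovitch covering of almost all of the unit square by finitely many disjoint squares centred
at points where `ψ` is differentiable and `g` is close to its average, so that on each square `ψ`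
is close to its affine approximation at the centre. -/
lemma exists_balls {ψ : V2 → V3} {L : NNReal} (hψ : LipschitzWith L ψ) {g : V2 → ℝ} {m C : ℝ}
    (hgm : Measurable g) (hm : ∀ p, m ≤ g p) (hC : ∀ p, g p ≤ C) {ε : ℝ} (hε : 0 < ε) :
    ∃ (s : Finset V2) (ρ : V2 → ℝ),
      (∀ p ∈ s, 0 < ρ p ∧ Metric.closedBall p (ρ p) ⊆ Metric.ball 0 (1 / 2) ∧
        (∀ z ∈ Metric.closedBall p (ρ p), ‖ψ p + fderiv ℝ ψ p (z - p) - ψ z‖ ≤ ε * ρ p) ∧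
        g p * (2 * ρ p) ^ 2 ≤ (∫ z in Metric.closedBall p (ρ p), g z) + ε * (2 * ρ p) ^ 2) ∧
      (∀ p ∈ s, ∀ q ∈ s, p ≠ q →
        Disjoint (Metric.closedBall p (ρ p)) (Metric.closedBall q (ρ q))) ∧
      1 - ε ≤ ∑ p ∈ s, (2 * ρ p) ^ 2 ∧ ∑ p ∈ s, (2 * ρ p) ^ 2 ≤ 1 ∧
      ∑ p ∈ s, (∫ z in Metric.closedBall p (ρ p), g z) + m * (1 - ∑ p ∈ s, (2 * ρ p) ^ 2) ≤
        ∫ z in Metric.ball 0 (1 / 2), g z := by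
  classical
  have hgint : ∀ {S : Set V2}, volume S < ⊤ → IntegrableOn g S := fun hS =>
    Measure.integrableOn_of_bounded (M := max |m| |C|) hS.ne hgm.aestronglyMeasurable
      (ae_of_all _ fun p => abs_le_max_abs_abs (hm p) (hC p))
  have hloc : LocallyIntegrable g := fun p =>
    ⟨Metric.ball p 1, Metric.ball_mem_nhds p one_pos, hgint measure_ball_lt_top⟩
  set G : Set V2 := {p | p ∈ Metric.ball (0 : V2) (1 / 2) ∧ DifferentiableAt ℝ ψ p ∧
    Tendsto (fun r => ⨍ z in Metric.closedBall p r, g z) (nhdsWithin 0 (Set.Ioi 0)) (nhds (g p))}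
    with hG
  have hGae : ∀ᵐ p : V2, p ∈ Metric.ball (0 : V2) (1 / 2) → p ∈ G := by
    filter_upwards [hψ.ae_differentiableAt (μ := volume),
      (Besicovitch.vitaliFamily (volume : Measure V2)).ae_tendsto_average hloc] with p h1 h2 hp
    exact ⟨hp, h1, h2.comp (Besicovitch.tendsto_filterAt volume p)⟩
  set f : V2 → Set ℝ := fun p => {r | Metric.closedBall p r ⊆ Metric.ball 0 (1 / 2) ∧
    (∀ z ∈ Metric.closedBall p r, ‖ψ p + fderiv ℝ ψ p (z - p) - ψ z‖ ≤ ε * r) ∧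
    g p ≤ (⨍ z in Metric.closedBall p r, g z) + ε} with hf
  -- every small radius is admissible at a point of `G`
  have hfne : ∀ p ∈ G, ∀ δ > 0, (f p ∩ Set.Ioo 0 δ).Nonempty := by
    rintro p ⟨hp1, hp2, hp3⟩ δ hδ
    obtain ⟨r₁, hr₁, hball⟩ := Metric.nhds_basis_closedBall.mem_iff.1
      (Metric.isOpen_ball.mem_nhds hp1)
    have hlin := (hasFDerivAt_iff_isLittleO.1 hp2.hasFDerivAt).def hε
    obtain ⟨r₂, hr₂, hlin⟩ := Metric.nhds_basis_closedBall.mem_iff.1 hlin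
    have hav : ∀ᶠ r in nhdsWithin (0 : ℝ) (Set.Ioi 0),
        g p ≤ (⨍ z in Metric.closedBall p r, g z) + ε := by
      filter_upwards [hp3.eventually (lt_mem_nhds (show g p - ε < g p by linarith))] with r hr
      linarith
    have hsm : ∀ᶠ r in nhdsWithin (0 : ℝ) (Set.Ioi 0), r ∈ Set.Ioo 0 (min δ (min r₁ r₂)) :=
      Ioo_mem_nhdsGT (lt_min hδ (lt_min hr₁ hr₂))
    obtain ⟨r, hr1, hr2⟩ := (hav.and hsm).exists
    have hrδ := hr2.2.trans_le (min_le_left _ _)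
    have hrr₁ := hr2.2.trans_le ((min_le_right _ _).trans (min_le_left _ _))
    have hrr₂ := hr2.2.trans_le ((min_le_right _ _).trans (min_le_right _ _))
    refine ⟨r, ⟨(Metric.closedBall_subset_closedBall hrr₁.le).trans hball, fun z hz => ?_, hr1⟩,
      hr2.1, hrδ⟩
    have h := hlin (Metric.closedBall_subset_closedBall hrr₂.le hz)
    have h' : ‖ψ z - ψ p - fderiv ℝ ψ p (z - p)‖ ≤ ε * ‖z - p‖ := h
    rw [← norm_neg, show -(ψ p + fderiv ℝ ψ p (z - p) - ψ z) = ψ z - ψ p - fderiv ℝ ψ p (z - p) by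
      abel]
    refine h'.trans (mul_le_mul_of_nonneg_left ?_ hε.le)
    rw [Metric.mem_closedBall, dist_eq_norm] at hz
    exact hz
  obtain ⟨t, r, htc, htG, htr, hcov, hdisj⟩ :=
    Besicovitch.exists_disjoint_closedBall_covering_ae (volume : Measure V2) f G hfne
      (fun _ => 1) (fun _ _ => one_pos)
  have hvolU : 1 ≤ ∑' p : t, volume (Metric.closedBall (p : V2) (r p)) := by
    rw [← measure_biUnion htc hdisj fun p _ => measurableSet_closedBall, ← vol_sq2]
    refine measure_mono_ae ?_
    have hc : ∀ᵐ p : V2, ¬ (p ∈ G \ ⋃ x ∈ t, Metric.closedBall x (r x)) :=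
      measure_eq_zero_iff_ae_notMem.1 hcov
    filter_upwards [hGae, hc] with p h1 h2 hp
    by_contra h3
    exact h2 ⟨h1 hp, h3⟩
  -- finitely many of the balls already have total measure larger than `1 - ε`
  have hex : ∃ s₀ : Finset t, ENNReal.ofReal (1 - ε) <
      ∑ p ∈ s₀, volume (Metric.closedBall (p : V2) (r p)) := by
    rw [← lt_iSup_iff, ← ENNReal.tsum_eq_iSup_sum]
    refine lt_of_lt_of_le ?_ hvolU
    rw [← ENNReal.ofReal_one]
    exact (ENNReal.ofReal_lt_ofReal_iff one_pos).2 (by linarith)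
  obtain ⟨s₀, hs₀⟩ := hex
  set s : Finset V2 := s₀.map (Function.Embedding.subtype _) with hs
  have hst : ∀ p ∈ s, p ∈ t := fun p hp => by
    obtain ⟨q, _, rfl⟩ := Finset.mem_map.1 hp
    exact q.2
  have hrpos : ∀ p ∈ s, 0 < r p := fun p hp => (htr p (hst p hp)).2.1
  have hvol : ∀ p ∈ s, volume.real (Metric.closedBall p (r p)) = (2 * r p) ^ 2 := fun p hp =>
    vol_closedBall p (hrpos p hp).le
  have hpd : (s : Set V2).Pairwise (Function.onFun Disjoint fun p => Metric.closedBall p (r p)) :=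
    fun p hp q hq hpq => hdisj (hst p hp) (hst q hq) hpq
  have hsubU : (⋃ p ∈ s, Metric.closedBall p (r p)) ⊆ Metric.ball 0 (1 / 2) :=
    Set.iUnion₂_subset fun p hp => (htr p (hst p hp)).1.1
  have hUm : MeasurableSet (⋃ p ∈ s, Metric.closedBall p (r p)) :=
    Finset.measurableSet_biUnion _ fun p _ => measurableSet_closedBall
  have hvolsum : volume.real (⋃ p ∈ s, Metric.closedBall p (r p)) = ∑ p ∈ s, (2 * r p) ^ 2 := by
    rw [measureReal_biUnion_finset hpd (fun _ _ => measurableSet_closedBall)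
      (fun _ _ => measure_closedBall_lt_top.ne)]
    exact Finset.sum_congr rfl hvol
  have hvolB : volume.real (Metric.ball (0 : V2) (1 / 2)) = 1 := by
    rw [Measure.real, vol_sq2, ENNReal.toReal_one]
  refine ⟨s, r, fun p hp => ?_, fun p hp q hq hpq => hpd hp hq hpq, ?_, ?_, ?_⟩
  · obtain ⟨⟨h1, h2, h3⟩, h4⟩ := htr p (hst p hp)
    refine ⟨h4.1, h1, h2, ?_⟩
    rw [setAverage_eq, hvol p hp, smul_eq_mul] at h3
    have hpos : 0 < (2 * r p) ^ 2 := by have := h4.1; positivity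
    have h5 := mul_le_mul_of_nonneg_right h3 hpos.le
    rwa [add_mul, mul_comm _⁻¹, inv_mul_cancel_right₀ hpos.ne'] at h5
  · have h1 : ∑ p ∈ s₀, volume (Metric.closedBall (p : V2) (r p)) =
        volume (⋃ p ∈ s, Metric.closedBall p (r p)) := by
      rw [measure_biUnion_finset hpd fun _ _ => measurableSet_closedBall, hs, Finset.sum_map]
      rfl
    rw [h1] at hs₀
    rw [← hvolsum]
    have hfin : volume (⋃ p ∈ s, Metric.closedBall p (r p)) ≠ ⊤ :=
      ((measure_mono hsubU).trans_lt measure_ball_lt_top).ne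
    exact (ENNReal.ofReal_le_iff_le_toReal hfin).1 hs₀.le
  · rw [← hvolsum, ← hvolB]
    exact measureReal_mono hsubU measure_ball_lt_top.ne
  · have hUfin : volume (⋃ p ∈ s, Metric.closedBall p (r p)) < ⊤ :=
      (measure_mono hsubU).trans_lt measure_ball_lt_top
    have hRfin : volume (Metric.ball (0 : V2) (1 / 2) \ ⋃ p ∈ s, Metric.closedBall p (r p)) < ⊤ :=
      (measure_mono Set.sdiff_subset).trans_lt measure_ball_lt_top
    have h1 := setIntegral_union (f := g) (μ := volume)
      (s := ⋃ p ∈ s, Metric.closedBall p (r p))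
      (t := Metric.ball (0 : V2) (1 / 2) \ ⋃ p ∈ s, Metric.closedBall p (r p))
      Set.disjoint_sdiff_right (measurableSet_ball.diff hUm) (hgint hUfin) (hgint hRfin)
    rw [Set.union_sdiff_cancel hsubU] at h1
    rw [h1, integral_biUnion_finset s (fun _ _ => measurableSet_closedBall) hpd
      (fun _ _ => hgint measure_closedBall_lt_top)]
    refine add_le_add le_rfl ?_
    have h2 := setIntegral_mono_on (μ := volume) (f := fun _ => m) (g := g)
      (integrableOn_const hRfin.ne) (hgint hRfin) (measurableSet_ball.diff hUm) (fun p _ => hm p)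
    rw [setIntegral_const, measureReal_sdiff hsubU hUm measure_ball_lt_top.ne, hvolB, hvolsum,
      smul_eq_mul, mul_comm] at h2
    exact h2

/-- `ψ` can be made exactly affine on slightly smaller concentric squares. The correction, the
affine approximation minus `ψ`, is truncated at the height `(ρ - ‖z - p‖)⁺`; hence it vanishes off
the squares and its slope stays bounded independently of `ε`. -/
lemma exists_flat {ψ : V2 → V3} {L : NNReal} (hψ : LipschitzWith L ψ)
    (hψ0 : ∀ z, 1 / 2 ≤ ‖z‖ → ψ z = 0) {ε : ℝ} (s : Finset V2) (ρ : V2 → ℝ)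
    (hs : ∀ p ∈ s, 0 < ρ p ∧ Metric.closedBall p (ρ p) ⊆ Metric.ball 0 (1 / 2) ∧
        ∀ z ∈ Metric.closedBall p (ρ p), ‖ψ p + fderiv ℝ ψ p (z - p) - ψ z‖ ≤ ε * ρ p)
    (hε : 0 < ε)
    (hdisj : ∀ p ∈ s, ∀ q ∈ s, p ≠ q →
        Disjoint (Metric.closedBall p (ρ p)) (Metric.closedBall q (ρ q))) :
    ∃ Ψ : V2 → V3, (∃ K : NNReal, LipschitzWith K Ψ) ∧ (∀ z, 1 / 2 ≤ ‖z‖ → Ψ z = 0) ∧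
      (∀ p ∈ s, ∀ z, ‖z - p‖ < (1 - ε) * ρ p → Ψ z = ψ p + fderiv ℝ ψ p (z - p)) ∧
      ∀ z, ∀ᶠ z' in nhds z, ‖Ψ z' - Ψ z‖ ≤ (L + max (L + L) 1 : NNReal) * ‖z' - z‖ := by
  classical
  set b : V2 → V2 → V3 := fun p z =>
    clampv (((1 : NNReal) : ℝ) * max (ρ p - ‖z - p‖) 0) (ψ p + fderiv ℝ ψ p (z - p) - ψ z) with hb
  have hbL : ∀ p, LipschitzWith (max (L + L) 1) (b p) := fun p => by
    refine lipschitz_clampv (lipschitz_profile 1 p (ρ p)) (LipschitzWith.sub ?_ hψ)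
    refine LipschitzWith.of_dist_le_mul fun x y => ?_
    rw [dist_add_left, dist_eq_norm, ← map_sub, sub_sub_sub_cancel_right, dist_eq_norm]
    exact (ContinuousLinearMap.le_opNorm _ _).trans
      (mul_le_mul_of_nonneg_right (norm_fderiv_le_of_lipschitz ℝ hψ) (norm_nonneg _))
  have hb0 : ∀ p z, ρ p ≤ ‖z - p‖ → b p z = 0 := fun p z h => by
    simp only [hb]
    rw [max_eq_right (by linarith), mul_zero, clampv_zero]
  have hfar : ∀ p z, z ∉ Metric.closedBall p (ρ p) → ρ p < ‖z - p‖ := fun p z h => by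
    rw [Metric.mem_closedBall, dist_eq_norm] at h
    exact not_le.1 h
  obtain ⟨K, hK⟩ := lipschitz_sum s (φ := b) (fun p _ => ⟨_, hbL p⟩)
  refine ⟨fun z => ψ z + ∑ p ∈ s, b p z, ⟨_, hψ.add hK⟩, fun z hz => ?_, fun p hp z hz => ?_,
    fun z => ?_⟩
  · show ψ z + ∑ p ∈ s, b p z = 0
    rw [hψ0 z hz, Finset.sum_eq_zero, add_zero]
    intro p hp
    refine hb0 p z (hfar p z fun h => ?_).le
    have := (hs p hp).2.1 h
    rw [mem_ball_zero_iff] at this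
    linarith
  · obtain ⟨h1, h2, h3⟩ := hs p hp
    have hzm : z ∈ Metric.closedBall p (ρ p) := by
      rw [Metric.mem_closedBall, dist_eq_norm]
      nlinarith
    have hbp : b p z = ψ p + fderiv ℝ ψ p (z - p) - ψ z := by
      refine clampv_eq ((h3 z hzm).trans ?_)
      rw [NNReal.coe_one, one_mul]
      refine le_trans ?_ (le_max_left _ _)
      nlinarith
    show ψ z + ∑ q ∈ s, b q z = _
    rw [Finset.sum_eq_single p, hbp]
    · abel
    · intro q hq hqp
      exact hb0 q z (hfar q z (Set.disjoint_left.1 (hdisj p hp q hq hqp.symm) hzm)).le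
    · exact fun h => absurd hp h
  · have hcl : ∀ p, z ∉ Metric.closedBall p (ρ p) → ∀ᶠ z' in nhds z, b p z' = 0 := by
      intro p hp
      filter_upwards [Metric.isClosed_closedBall.isOpen_compl.mem_nhds hp] with z' hz'
      exact hb0 p z' (hfar p z' hz').le
    by_cases hz : ∃ p ∈ s, z ∈ Metric.closedBall p (ρ p)
    · obtain ⟨p, hp, hzp⟩ := hz
      have hev : ∀ᶠ z' in nhds z, ∀ q ∈ s, q ≠ p → b q z' = 0 :=
        (Finset.eventually_all s).2 fun q hq => by
          by_cases hqp : q = p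
          · exact Eventually.of_forall fun _ h => absurd hqp h
          · filter_upwards [hcl q (Set.disjoint_left.1 (hdisj p hp q hq (Ne.symm hqp)) hzp)]
              with z' h _ using h
      have hsum : ∀ z', (∀ q ∈ s, q ≠ p → b q z' = 0) → ∑ q ∈ s, b q z' = b p z' := fun z' h =>
        Finset.sum_eq_single p h fun h' => absurd hp h'
      filter_upwards [hev] with z' hz'
      show ‖ψ z' + ∑ q ∈ s, b q z' - (ψ z + ∑ q ∈ s, b q z)‖ ≤ _
      rw [hsum z' hz', hsum z hev.self_of_nhds, ← dist_eq_norm, ← dist_eq_norm]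
      exact (hψ.add (hbL p)).dist_le_mul z' z
    · push Not at hz
      have hev : ∀ᶠ z' in nhds z, ∀ q ∈ s, b q z' = 0 :=
        (Finset.eventually_all s).2 fun q hq => hcl q (hz q hq)
      filter_upwards [hev] with z' hz'
      show ‖ψ z' + ∑ q ∈ s, b q z' - (ψ z + ∑ q ∈ s, b q z)‖ ≤ _
      rw [Finset.sum_eq_zero hz', Finset.sum_eq_zero hev.self_of_nhds, add_zero, add_zero]
      rw [← dist_eq_norm, ← dist_eq_norm]
      refine (hψ.dist_le_mul z' z).trans (mul_le_mul_of_nonneg_right ?_ dist_nonneg)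
      exact_mod_cast le_self_add

/-! ### Quasiconvexity -/

lemma abs_gradm2_le {ψ : V2 → V3} {L : NNReal} (hψ : LipschitzWith L ψ) (p : V2) (i : Fin 3)
    (j : Fin 2) : |gradm2 ψ p i j| ≤ L := by
  have h1 : ‖(Pi.single j 1 : V2)‖ = 1 := by
    rw [Pi.norm_single]; simp
  calc |gradm2 ψ p i j| = ‖(fderiv ℝ ψ p (Pi.single j 1)) i‖ := rfl
    _ ≤ ‖fderiv ℝ ψ p (Pi.single j 1)‖ := norm_le_pi_norm _ i
    _ ≤ ‖fderiv ℝ ψ p‖ * ‖(Pi.single j 1 : V2)‖ := ContinuousLinearMap.le_opNorm _ _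
    _ ≤ L := by rw [h1, mul_one]; exact norm_fderiv_le_of_lipschitz ℝ hψ

lemma measurable_density {W : V3 → M33 → ℝ} {m : ℝ} (hW : Good W m) (ξ : M32) (ψ : V2 → V3) :
    Measurable fun p => homDens W (ξ + gradm2 ψ p) := by
  have h : Measurable fun p : V2 => (fun i j => ξ i j + gradm2 ψ p i j : Fin 3 → Fin 2 → ℝ) := by
    refine measurable_pi_lambda _ fun i => measurable_pi_lambda _ fun j => ?_
    refine Measurable.const_add ?_ _
    exact (measurable_pi_apply i).comp (measurable_fderiv_apply_const ℝ ψ (Pi.single j 1))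
  exact (measurable_homDens hW).comp h

/-- A map that is locally an affine function of `x_α` has gradient `(F | 0)`. -/
lemma gradm_of_affine {v : V3 → V3} {x : V3} (a : V3) (F : V2 →L[ℝ] V3)
    (h : v =ᶠ[nhds x] fun y => a + F (pl y)) :
    gradm v x = withCol (Matrix.of fun i j => F (Pi.single j 1) i) 0 := by
  have hd : HasFDerivAt (fun y => a + F (pl y)) (F.comp pl) x :=
    (F.comp pl).hasFDerivAt.const_add a
  ext i j
  have h1 : gradm v x i j = F (pl (Pi.single j 1)) i := by
    simp only [gradm, Matrix.of_apply]
    rw [h.fderiv_eq, hd.fderiv]; rfl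
  rw [h1]
  have h2 : ∀ k : Fin 2, pl (Pi.single (Fin.castSucc k) 1 : V3) = Pi.single k 1 := fun k => by
    ext l; fin_cases k <;> fin_cases l <;> simp
  have h3 : pl (Pi.single 2 1 : V3) = 0 := by
    ext l; fin_cases l <;> simp
  fin_cases j
  · have := h2 0
    simp only [Fin.castSucc_zero] at this
    simp [withCol, this]
  · have := h2 1
    simp only [Fin.castSucc_one] at this
    simp [withCol, this]
  · simp [withCol, h3]

/-- Error bookkeeping: the squares of areas `D * V p` carry the averages of `g` up to `ε`, and the
energy on the remaining area `1 - D * ∑ V p ≤ 3ε` is at most `C` per unit area. -/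
lemma error_arith {s : Finset V2} {V g I : V2 → ℝ} {m C ε J : ℝ} (hε : 0 < ε) (hε1 : ε < 1)
    (hmC : m ≤ C) (hV : ∀ p ∈ s, 0 ≤ V p) (hm : ∀ p, m ≤ g p)
    (hI : ∀ p ∈ s, g p * V p ≤ I p + ε * V p)
    (hS : 1 - ε ≤ ∑ p ∈ s, V p) (hS1 : ∑ p ∈ s, V p ≤ 1)
    (hJ : ∑ p ∈ s, I p + m * (1 - ∑ p ∈ s, V p) ≤ J) :
    ∑ p ∈ s, (1 - ε) ^ 2 * V p * (g p + ε) + C * (1 - ∑ p ∈ s, (1 - ε) ^ 2 * V p) ≤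
      J + ε * (3 * (C - m) + 2) := by
  have hD1 : (1 - ε) ^ 2 ≤ 1 := by nlinarith
  have hD0 : 0 ≤ (1 - ε) ^ 2 := sq_nonneg _
  have h1 : ∑ p ∈ s, (1 - ε) ^ 2 * V p * (g p + ε) ≤
      ∑ p ∈ s, (I p + (2 * ε) * V p - (m * (1 - (1 - ε) ^ 2)) * V p) := by
    refine Finset.sum_le_sum fun p hp => ?_
    have h2 : 0 ≤ (1 - (1 - ε) ^ 2) * ((g p - m) * V p) :=
      mul_nonneg (by linarith) (mul_nonneg (by linarith [hm p]) (hV p hp))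
    have h3 : 0 ≤ (1 - (1 - ε) ^ 2) * (ε * V p) :=
      mul_nonneg (by linarith) (mul_nonneg hε.le (hV p hp))
    linarith [hI p hp]
  rw [Finset.sum_sub_distrib, Finset.sum_add_distrib, ← Finset.mul_sum, ← Finset.mul_sum] at h1
  rw [← Finset.mul_sum]
  set S := ∑ p ∈ s, V p
  have h4 : 1 - (1 - ε) ^ 2 * S ≤ 3 * ε := by
    have : (1 - ε) ^ 2 * (1 - ε) ≤ (1 - ε) ^ 2 * S := mul_le_mul_of_nonneg_left hS hD0
    nlinarith [pow_pos hε 3, pow_pos hε 2]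
  have h5 : (C - m) * (1 - (1 - ε) ^ 2 * S) ≤ (C - m) * (3 * ε) :=
    mul_le_mul_of_nonneg_left h4 (by linarith)
  have h6 : ε * S ≤ ε * 1 := mul_le_mul_of_nonneg_left hS1 hε.le
  linarith

/-- The quasiconvexity inequality up to an error of order `ε`, with test maps `T Ψ(x_α / T)` on the
cylinder of side `T`, where `Ψ` is affine on most of the unit square. -/
lemma core_eps {W : V3 → M33 → ℝ} {m C : ℝ} (hW : Good W m) (ξ : M32) {ψ : V2 → V3} {L : NNReal}
    (hψ : LipschitzWith L ψ) (hψ0 : ∀ z, 1 / 2 ≤ ‖z‖ → ψ z = 0) {r : ℝ} (hr0 : 0 ≤ r)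
    (hr : ∀ i j, |ξ i j| ≤ r)
    (hC : ∀ x ζ, (∀ i j, |ζ i j| ≤ r + (L + max (L + L) 1 : NNReal)) → W x ζ ≤ C)
    {ε : ℝ} (hε : 0 < ε) (hε1 : ε < 1) :
    homDens W ξ ≤ (∫ p in Metric.ball 0 (1 / 2), homDens W (ξ + gradm2 ψ p)) +
      ε * (3 * (C - m) + 2) := by
  have hLK : (L : ℝ) ≤ (L + max (L + L) 1 : NNReal) := by exact_mod_cast le_self_add
  set K : NNReal := L + max (L + L) 1 with hK
  set g : V2 → ℝ := fun p => homDens W (ξ + gradm2 ψ p) with hg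
  have hgm : ∀ p, m ≤ g p := fun p => homDens_ge hW _
  have hgC : ∀ p, g p ≤ C := fun p => homDens_le hW _ fun x => hC x _ fun i j => by
    have h := abs_withCol_le (ξ := ξ + gradm2 ψ p) (r := r + K) (A := 0) (K := 0)
      (by positivity) (fun i j => (abs_add_le _ _).trans
        (add_le_add (hr i j) ((abs_gradm2_le hψ p i j).trans hLK))) (by simp) i j
    simpa using h
  obtain ⟨s, ρ, hs, hdisj, hS, hS1, hJ⟩ :=
    exists_balls hψ (measurable_density hW ξ ψ) hgm hgC hε
  obtain ⟨Ψ, ⟨K', hK'⟩, hΨ0, hΨa, hΨK⟩ := exists_flat hψ hψ0 s ρ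
    (fun p hp => ⟨(hs p hp).1, (hs p hp).2.1, (hs p hp).2.2.1⟩) hε hdisj
  rw [← hK] at hΨK
  -- on large squares the infima are controlled by the homogenized density at the local gradients
  have hlarge : ∀ᶠ T : ℝ in atTop, ∀ p ∈ s,
      cinf W (ξ + gradm2 ψ p) (T • p) (T * ((1 - ε) * ρ p)) ≤
        (2 * (T * ((1 - ε) * ρ p))) ^ 2 * (g p + ε) :=
    (Finset.eventually_all s).2 fun p hp => by
      obtain ⟨R₀, hR₀⟩ := cinf_le_homDens hW (ξ + gradm2 ψ p) hε
      have hpos : 0 < (1 - ε) * ρ p := mul_pos (by linarith) (hs p hp).1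
      filter_upwards [(tendsto_id.atTop_mul_const hpos).eventually_ge_atTop R₀] with T hT
      exact hR₀ _ _ hT
  refine liminf_le_of_frequently_le (Eventually.frequently ?_) (isBounded_ge hW ξ)
  filter_upwards [hlarge, eventually_gt_atTop 0] with T hT hT0
  have hTi : 0 < T⁻¹ := inv_pos.2 hT0
  set v : V3 → V3 := fun x => T • Ψ (T⁻¹ • pl x) with hv
  have hscale : ∀ (x : V3) (p : V2), ‖T⁻¹ • pl x - p‖ = T⁻¹ * ‖pl x - T • p‖ := fun x p => by
    rw [← abs_of_pos hTi, ← Real.norm_eq_abs, ← norm_smul, smul_sub, Real.norm_eq_abs,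
      abs_of_pos hTi, smul_smul, inv_mul_cancel₀ hT0.ne', one_smul]
  have hvp : v ∈ patch 0 (T / 2) := by
    refine ⟨⟨K', LipschitzWith.of_dist_le_mul fun x y => ?_⟩, fun x hx => ?_⟩
    · have h := hK'.dist_le_mul (T⁻¹ • pl x) (T⁻¹ • pl y)
      rw [dist_smul₀, Real.norm_eq_abs, abs_of_pos hTi] at h
      simp only [hv]
      rw [dist_smul₀, Real.norm_eq_abs, abs_of_pos hT0]
      have h2 : dist (pl x) (pl y) ≤ dist x y := by
        simpa using lipschitz_pl.dist_le_mul x y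
      calc T * dist (Ψ (T⁻¹ • pl x)) (Ψ (T⁻¹ • pl y)) ≤ T * (K' * (T⁻¹ * dist (pl x) (pl y))) :=
            mul_le_mul_of_nonneg_left h hT0.le
        _ = K' * dist (pl x) (pl y) := by field_simp
        _ ≤ K' * dist x y := mul_le_mul_of_nonneg_left h2 K'.2
    · simp only [hv]
      rw [hΨ0, smul_zero]
      have h := hscale x 0
      rw [sub_zero, smul_zero] at h
      rw [h, inv_mul_eq_div, le_div_iff₀ hT0]
      linarith
  have hvC : ∀ x, W x (withCol ξ (gradm v x)) ≤ C := fun x => by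
    refine hC x _ (abs_withCol_le hr0 hr (abs_gradm_le ?_))
    refine norm_fderiv_le_of_lip' ℝ K.2 ?_
    have hcont : Continuous fun y : V3 => T⁻¹ • pl y := by fun_prop
    filter_upwards [hcont.continuousAt.eventually (hΨK (T⁻¹ • pl x))] with y hy
    simp only [hv]
    rw [← smul_sub, norm_smul, Real.norm_eq_abs, abs_of_pos hT0]
    rw [← smul_sub, norm_smul, Real.norm_eq_abs, abs_of_pos hTi, ← map_sub] at hy
    calc T * ‖Ψ (T⁻¹ • pl y) - Ψ (T⁻¹ • pl x)‖ ≤ T * (K * (T⁻¹ * ‖pl (y - x)‖)) :=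
          mul_le_mul_of_nonneg_left hy hT0.le
      _ = K * ‖pl (y - x)‖ := by field_simp
      _ ≤ K * ‖y - x‖ := mul_le_mul_of_nonneg_left (norm_pl_le _) K.2
  have hin : ∀ (p q : V2) {a : ℝ}, ‖q - T • p‖ < T * a → ‖T⁻¹ • q - p‖ < a := fun p q a h => by
    have h1 : T⁻¹ • q - p = T⁻¹ • (q - T • p) := by
      rw [smul_sub, smul_smul, inv_mul_cancel₀ hT0.ne', one_smul]
    rw [h1, norm_smul, Real.norm_eq_abs, abs_of_pos hTi, inv_mul_lt_iff₀ hT0]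
    exact h
  have hmem : ∀ p ∈ s, ∀ q : V2, ‖q - T • p‖ < T * ((1 - ε) * ρ p) →
      T⁻¹ • q ∈ Metric.closedBall p (ρ p) := fun p hp q h => by
    rw [Metric.mem_closedBall, dist_eq_norm]
    have := hin p q h
    nlinarith [(hs p hp).1]
  have hsub := cinf_subadd hW ξ 0 (R := T / 2) (by positivity) s (fun p => T • p)
    (fun p => T * ((1 - ε) * ρ p))
    (fun p hp => mul_nonneg hT0.le (mul_nonneg (by linarith) (hs p hp).1.le)) hvp (gradm2 ψ)
    (fun p hp q hq => by
      have h := (hs p hp).2.1 (hmem p hp q hq)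
      rw [mem_ball_zero_iff, norm_smul, Real.norm_eq_abs, abs_of_pos hTi,
        inv_mul_lt_iff₀ hT0] at h
      rw [sub_zero]
      linarith)
    (fun p hp p' hp' hne q hq hq' =>
      Set.disjoint_left.1 (hdisj p hp p' hp' hne) (hmem p hp q hq) (hmem p' hp' q hq'))
    (fun p hp x hx => by
      refine gradm_of_affine (T • (ψ p - fderiv ℝ ψ p p)) (fderiv ℝ ψ p) ?_
      have hopen : IsOpen {y : V3 | ‖pl y - T • p‖ < T * ((1 - ε) * ρ p)} :=
        isOpen_lt (pl.continuous.sub continuous_const).norm continuous_const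
      filter_upwards [hopen.mem_nhds hx] with y hy
      simp only [hv]
      rw [hΨa p hp _ (hin p _ hy), map_sub, map_smul, smul_add, smul_sub, smul_sub, smul_smul,
        mul_inv_cancel₀ hT0.ne', one_smul]
      abel)
    hvC
  have harith := error_arith (V := fun p => (2 * ρ p) ^ 2) (C := C) hε hε1 ((hgm 0).trans (hgC 0))
    (fun p _ => sq_nonneg _) hgm (fun p hp => (hs p hp).2.2.2) hS hS1 hJ
  have h1 : cinf W ξ 0 (T / 2) ≤ T ^ 2 * (∑ p ∈ s, (1 - ε) ^ 2 * (2 * ρ p) ^ 2 * (g p + ε) +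
      C * (1 - ∑ p ∈ s, (1 - ε) ^ 2 * (2 * ρ p) ^ 2)) := by
    refine hsub.trans ((add_le_add (Finset.sum_le_sum hT) le_rfl).trans_eq ?_)
    rw [mul_add, Finset.mul_sum]
    congr 1
    · exact Finset.sum_congr rfl fun p _ => by ring
    · have : ∑ p ∈ s, (2 * (T * ((1 - ε) * ρ p))) ^ 2 =
          T ^ 2 * ∑ p ∈ s, (1 - ε) ^ 2 * (2 * ρ p) ^ 2 := by
        rw [Finset.mul_sum]
        exact Finset.sum_congr rfl fun p _ => by ring
      rw [this]
      ring
  rw [scal_mul W ξ hT0] at h1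
  exact (le_of_mul_le_mul_left h1 (by positivity)).trans harith

lemma core {W : V3 → M33 → ℝ} {m : ℝ} (hW : Good W m) (ξ : M32) {ψ : V2 → V3} {L : NNReal}
    (hψ : LipschitzWith L ψ) (hψ0 : ∀ z, 1 / 2 ≤ ‖z‖ → ψ z = 0) :
    homDens W ξ ≤ ∫ p in Metric.ball 0 (1 / 2), homDens W (ξ + gradm2 ψ p) := by
  obtain ⟨r, hr0, hr⟩ := exists_bound ξ
  obtain ⟨C, hC⟩ := hW.up (r + (L + max (L + L) 1 : NNReal))
  have hlim : Tendsto (fun ε : ℝ => (∫ p in Metric.ball 0 (1 / 2), homDens W (ξ + gradm2 ψ p)) +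
      ε * (3 * (C - m) + 2)) (nhdsWithin 0 (Set.Ioi 0))
      (nhds ((∫ p in Metric.ball 0 (1 / 2), homDens W (ξ + gradm2 ψ p)) +
        0 * (3 * (C - m) + 2))) :=
    ((continuous_const.add (continuous_id.mul continuous_const)).tendsto 0).mono_left
      nhdsWithin_le_nhds
  rw [zero_mul, add_zero] at hlim
  refine ge_of_tendsto hlim ?_
  filter_upwards [Ioo_mem_nhdsGT (zero_lt_one' ℝ)] with ε hε
  exact core_eps hW ξ hψ hψ0 hr0 hr hC hε.1 hε.2

/-- A Lipschitz map vanishing on the boundary of the unit square agrees on the square with a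
Lipschitz map vanishing on the whole exterior. -/
lemma exists_cutoff {ψ : V2 → V3} {L : NNReal} (hψ : LipschitzWith L ψ)
    (hψ0 : ∀ y ∈ frontier sq2, ψ y = 0) :
    ∃ ψ' : V2 → V3, (∃ L' : NNReal, LipschitzWith L' ψ') ∧ (∀ z, 1 / 2 ≤ ‖z‖ → ψ' z = 0) ∧
      ∀ z, ‖z‖ < 1 / 2 → ψ' z = ψ z := by
  refine ⟨fun z => clampv ((L : ℝ) * max (1 / 2 - ‖z - 0‖) 0) (ψ z),
    ⟨_, lipschitz_clampv (lipschitz_profile L 0 (1 / 2)) hψ⟩, fun z hz => ?_, fun z hz => ?_⟩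
  · show clampv ((L : ℝ) * max (1 / 2 - ‖z - 0‖) 0) (ψ z) = 0
    rw [sub_zero, max_eq_right (by linarith), mul_zero, clampv_zero]
  · apply clampv_eq
    obtain ⟨q, hq, hzq⟩ := exists_radial z hz.le
    have hq0 : ψ q = 0 := hψ0 q (by
      rw [sq2_eq, frontier_ball _ (by norm_num), mem_sphere_zero_iff_norm]
      exact hq)
    have h1 := hψ.dist_le_mul z q
    rw [hq0, dist_zero_right, dist_eq_norm] at h1
    rw [sub_zero]
    exact h1.trans (mul_le_mul_of_nonneg_left (hzq.trans (le_max_left _ _)) L.2)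

lemma frobNorm_le {ξ : M33} {r : ℝ} (h : ∀ i j, |ξ i j| ≤ r) : frobNorm ξ ≤ 3 * |r| := by
  refine Real.sqrt_le_iff.2 ⟨by positivity, ?_⟩
  have : ∑ i : Fin 3, ∑ j : Fin 3, (ξ i j) ^ 2 ≤ ∑ _i : Fin 3, ∑ _j : Fin 3, |r| ^ 2 :=
    Finset.sum_le_sum fun i _ => Finset.sum_le_sum fun j _ => by
      rw [← sq_abs (ξ i j)]
      exact pow_le_pow_left₀ (abs_nonneg _) ((h i j).trans (le_abs_self r)) 2
  refine this.trans_eq ?_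
  simp only [Finset.sum_const, Finset.card_univ, Fintype.card_fin, nsmul_eq_mul]
  push_cast
  ring

/-- Growth in terms of a Young function implies `Good`. The lower bound uses `Φ > 0` on `(0, ∞)`,
with `min 0 (Φ 0)` for the value at `0`; the upper bound uses continuity of `Φ` on compact intervals. -/
lemma good_of_growth {Φ : ℝ → ℝ} (hΦ : IsYoung Φ) {W : V3 → M33 → ℝ} (hW : Caratheodory W)
    (hWper : H1per W) {β' β : ℝ} (hβ' : 0 < β') (hββ : β' < β)
    (hWg : ∀ x ξ, β' * Φ (frobNorm ξ) - 1 / β' ≤ W x ξ ∧ W x ξ ≤ β * (1 + Φ (frobNorm ξ))) :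
    Good W (β' * min 0 (Φ 0) - 1 / β') where
  car := hW
  per := hWper
  low x ξ := by
    refine le_trans (sub_le_sub_right (mul_le_mul_of_nonneg_left ?_ hβ'.le) _) (hWg x ξ).1
    rcases (Real.sqrt_nonneg (∑ i, ∑ j, (ξ i j) ^ 2)).eq_or_lt with h | h
    · have h' : frobNorm ξ = 0 := h.symm
      rw [h']
      exact min_le_right _ _
    · exact (min_le_left _ _).trans (hΦ.2.2.1 _ h).le
  up r := by
    obtain ⟨B, hB⟩ := (isCompact_Icc (a := (0 : ℝ)) (b := 3 * |r|)).bddAbove_image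
      (hΦ.1.mono fun t ht => ht.1)
    refine ⟨β * (1 + B), fun x ξ hξ => (hWg x ξ).2.trans ?_⟩
    refine mul_le_mul_of_nonneg_left (add_le_add le_rfl ?_) (hβ'.trans hββ).le
    exact hB ⟨frobNorm ξ, ⟨Real.sqrt_nonneg _, frobNorm_le hξ⟩, rfl⟩

/-- the unconstrained homogenized density `W_hom` is quasiconvex. -/
theorem stmt_16
    (Φ : ℝ → ℝ) (hΦ : IsYoung Φ) (hΔ : Delta2 Φ) (hΝ : Nabla2 Φ)
    (W : V3 → M33 → ℝ) (hW : Caratheodory W) (hWper : H1per W)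
    (β' β : ℝ) (hβ' : 0 < β') (hββ : β' < β)
    (hWg : ∀ x ξ, β' * Φ (frobNorm ξ) - 1 / β' ≤ W x ξ ∧ W x ξ ≤ β * (1 + Φ (frobNorm ξ)))
    (ξα : M32) (ψ : V2 → V3) (hψlip : ∃ Kc : NNReal, LipschitzWith Kc ψ)
    (hψ0 : ∀ y ∈ frontier sq2, ψ y = 0) :
    homDens W ξα ≤ ∫ y in sq2, homDens W (ξα + gradm2 ψ y) := by
  obtain ⟨L, hL⟩ := hψlip
  obtain ⟨ψ', ⟨L', hL'⟩, hout, hin⟩ := exists_cutoff hL hψ0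
  refine (core (good_of_growth hΦ hW hWper hβ' hββ hWg) ξα hL' hout).trans_eq ?_
  rw [sq2_eq]
  refine setIntegral_congr_fun measurableSet_ball fun p hp => ?_
  have hev : ψ' =ᶠ[nhds p] ψ := by
    filter_upwards [Metric.isOpen_ball.mem_nhds hp] with z hz
    exact hin z (mem_ball_zero_iff.1 hz)
  have : gradm2 ψ' p = gradm2 ψ p := by
    ext i j
    simp only [gradm2, Matrix.of_apply, hev.fderiv_eq]
  simp only [this]
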